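/- arXiv:1309.7842 — 13 statements merged into one kernel-verified Lean document; each statement's English description precedes it below -/
import Mathlib

section
/- Let p be an odd prime, q = p^m, and n ≥ 1. Every difference balanced function f : L∖{0} → K is balanced or an affine shift of a balanced function: there exists c ∈ K such that |{x ∈ L∖{0} : f(x) = c}| = q^{n−1} − 1 and |{x ∈ L∖{0} : f(x) = b}| = q^{n−1} for every b ∈ K with b ≠ c. -/
/-- A function `f : L∖{0} → K` is balanced if `0` has exactly `q^(n-1) - 1` preimages
among nonzero elements and every `b ≠ 0` has exactly `q^(n-1)` preimages. -/
def IsBalanced {K L : Type*} [Field K] [Field L] (q n : ℕ) (f : L → K) : Prop :=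
  Nat.card {x : L | x ≠ 0 ∧ f x = 0} = q ^ (n - 1) - 1 ∧
    ∀ b : K, b ≠ 0 → Nat.card {x : L | x ≠ 0 ∧ f x = b} = q ^ (n - 1)

/-- A function `f : L∖{0} → K` is difference balanced if `x ↦ f (a*x) - f x` is balanced
for every `a ≠ 0, 1`. -/
def IsDiffBalanced {K L : Type*} [Field K] [Field L] (q n : ℕ) (f : L → K) : Prop :=
  ∀ a : L, a ≠ 0 → a ≠ 1 → IsBalanced q n (fun x => f (a * x) - f x)

open Finset in
/-- The second moment of the fibre sizes of a function on a finite group counts coincidences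
along translations. -/
lemma sum_sq_card_fiber {G α : Type*} [Group G] [Fintype G] [Fintype α] [DecidableEq α]
    (g : G → α) :
    ∑ b, #{x | g x = b} ^ 2 = ∑ a, #{x | g (a * x) = g x} := by
  have h₁ : ∀ b, #{x | g x = b} ^ 2 = ∑ x with g x = b, #{y | g y = g x} := by
    intro b
    rw [sum_congr rfl (g := fun _ => #{x | g x = b}), sum_const, smul_eq_mul, sq]
    intro x hx
    rw [(mem_filter.mp hx).2]
  simp_rw [h₁]
  rw [Finset.sum_fiberwise univ g (fun x => #{y | g y = g x})]
  simp_rw [card_filter]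
  rw [sum_comm (s := univ) (t := univ) (f := fun a x => if g (a * x) = g x then 1 else 0)]
  refine sum_congr rfl fun x _ => ?_
  exact (Equiv.sum_comp (Equiv.mulRight x) fun y => if g y = g x then 1 else 0).symm

/-- An integer vector of squared norm `1` and coordinate sum `-1` is the negative of a
standard basis vector. -/
lemma exists_eq_neg_one_of_sum_sq_eq_one {ι : Type*} [Fintype ι] (e : ι → ℤ)
    (hsq : ∑ i, e i ^ 2 = 1) (hsum : ∑ i, e i = -1) :
    ∃ c, e c = -1 ∧ ∀ b, b ≠ c → e b = 0 := by
  classical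
  obtain ⟨c, hc⟩ : ∃ c, e c ≠ 0 := by
    by_contra! h
    simp [h] at hsum
  have hzero : ∀ b, b ≠ c → e b = 0 := by
    intro b hb
    have hle : e c ^ 2 + e b ^ 2 ≤ 1 := by
      rw [← hsq, ← Finset.sum_pair (f := fun i => e i ^ 2) hb.symm]
      exact Finset.sum_le_sum_of_subset_of_nonneg (Finset.subset_univ _)
        fun i _ _ => sq_nonneg (e i)
    have hpos : 0 < e c ^ 2 := by positivity
    exact pow_eq_zero_iff two_ne_zero |>.mp (by linarith [sq_nonneg (e b)])
  refine ⟨c, ?_, hzero⟩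
  rwa [Fintype.sum_eq_single c hzero] at hsum

open Finset in
lemma natCard_ne_zero_and {L : Type*} [Field L] [Fintype L] [Fintype Lˣ] (P : L → Prop)
    [DecidablePred P] :
    Nat.card {x : L | x ≠ 0 ∧ P x} = #{u : Lˣ | P u} := by
  rw [← Nat.subtype_card (p := fun u : Lˣ => P u) _ (by simp)]
  exact Nat.card_congr
    { toFun := fun x => ⟨Units.mk0 x.1 x.2.1, x.2.2⟩
      invFun := fun u => ⟨u.1, u.1.ne_zero, u.2⟩
      left_inv := fun _ => rfl
      right_inv := fun _ => Subtype.ext (Units.ext rfl) }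

/-- Every difference balanced function `f : L∖{0} → K` is balanced or an affine
shift of a balanced function: there is `c ∈ K` attaining `q^(n-1) - 1` preimages,
and all other values attain exactly `q^(n-1)` preimages. -/
theorem stmt_0 {K L : Type*} [Field K] [Field L] [Algebra K L] [Fintype K] [Fintype L]
    (p m n q : ℕ) (hp : p.Prime) (hodd : Odd p) (hm : 1 ≤ m) (hn : 1 ≤ n)
    (hq : q = p ^ m) (hK : Fintype.card K = q) (hL : Fintype.card L = q ^ n)
    (f : L → K) (hf : IsDiffBalanced q n f) :
    ∃ c : K, Nat.card {x : L | x ≠ 0 ∧ f x = c} = q ^ (n - 1) - 1 ∧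
      ∀ b : K, b ≠ c → Nat.card {x : L | x ≠ 0 ∧ f x = b} = q ^ (n - 1) := by
  classical
  have hq0 : 0 < q := hK ▸ Fintype.card_pos
  have hpow : 1 ≤ q ^ (n - 1) := Nat.one_le_pow _ _ hq0
  have hqn : (q : ℤ) ^ n = q * q ^ (n - 1) := by
    rw [← pow_succ', Nat.sub_add_cancel hn]
  have hunits : (Fintype.card Lˣ : ℤ) = q ^ n - 1 := by
    rw [Fintype.card_units, hL, Nat.cast_sub (Nat.one_le_pow _ _ hq0)]
    simp
  set N : K → ℕ := fun b => Finset.card {u : Lˣ | f u = b} with hN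
  have hcard : ∀ b, Nat.card {x : L | x ≠ 0 ∧ f x = b} = N b :=
    fun b => natCard_ne_zero_and (fun x => f x = b)
  have hsum : ∑ b, (N b : ℤ) = q ^ n - 1 := by
    rw [← hunits, ← Finset.card_univ,
      Finset.card_eq_sum_card_fiberwise (f := fun u : Lˣ => f u) (t := Finset.univ) (by simp)]
    simp [hN]
  have hcoinc : ∀ a : Lˣ, a ≠ 1 →
      (Finset.card {u : Lˣ | f ↑(a * u) = f u} : ℤ) = q ^ (n - 1) - 1 := by
    intro a ha
    have h := (hf a a.ne_zero (by simpa using ha)).1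
    rw [natCard_ne_zero_and (fun x => f (a * x) - f x = 0)] at h
    simp only [sub_eq_zero] at h
    simp only [Units.val_mul, h]
    push_cast [hpow]
    rfl
  have hsq : ∑ b, (N b : ℤ) ^ 2 = q ^ n - 1 + (q ^ n - 2) * (q ^ (n - 1) - 1) := by
    have h := congrArg (Nat.cast : ℕ → ℤ) (sum_sq_card_fiber fun u : Lˣ => f u)
    push_cast at h
    rw [h, ← Finset.add_sum_erase _ _ (Finset.mem_univ (1 : Lˣ)),
      Finset.sum_congr rfl fun a ha => by
        simpa using hcoinc a (Finset.ne_of_mem_erase ha)]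
    have hge : 1 ≤ Fintype.card Lˣ := Fintype.card_pos
    simp only [Units.val_one, one_mul, Finset.filter_true, Finset.card_univ, Finset.sum_const,
      Finset.card_erase_of_mem (Finset.mem_univ _), nsmul_eq_mul, Nat.cast_sub hge, hunits]
    push_cast
    ring
  obtain ⟨c, hc, hb⟩ := exists_eq_neg_one_of_sum_sq_eq_one
    (fun b => (N b : ℤ) - q ^ (n - 1))
    (by
      simp only [sub_sq, Finset.sum_add_distrib, Finset.sum_sub_distrib, ← Finset.sum_mul,
        ← Finset.mul_sum, hsq, hsum, Finset.sum_const, Finset.card_univ, hK, nsmul_eq_mul]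
      rw [hqn]
      ring)
    (by
      simp only [Finset.sum_sub_distrib, hsum, Finset.sum_const, Finset.card_univ, hK,
        nsmul_eq_mul]
      rw [hqn]
      ring)
  refine ⟨c, ?_, fun b hbc => ?_⟩
  · rw [hcard]
    zify [hpow]
    linarith
  · rw [hcard]
    zify
    linarith [hb b hbc]
end

section
/- Let p be an odd prime, q = p^m, and n ≥ 1. If f : L∖{0} → K is difference balanced and, for b ∈ K, d_b := |{x ∈ L∖{0} : f(x) = b}|, then Σ_{b ∈ K} d_b² = q^{2n−1} − 2q^{n−1} + 1. -/
/-- Counting nonzero elements of a field with a given property as a sum over units. -/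
lemma natCard_ne_zero_and_eq_sum_units {L : Type*} [Field L] [Fintype Lˣ]
    (P : L → Prop) [DecidablePred P] :
    (Nat.card {x : L | x ≠ 0 ∧ P x} : ℤ) = ∑ u : Lˣ, if P (u : L) then 1 else 0 := by
  have e : {x : L | x ≠ 0 ∧ P x} ≃ {u : Lˣ // P (u : L)} :=
    { toFun := fun x => ⟨Units.mk0 x.1 x.2.1, x.2.2⟩
      invFun := fun u => ⟨u.1, u.1.ne_zero, u.2⟩
      left_inv := fun x => rfl
      right_inv := fun u => by ext; rfl }
  rw [Nat.card_congr e, Nat.card_eq_fintype_card, Fintype.card_subtype, Finset.sum_boole]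

/-- The sum of the squared fibre sizes of a function on a finite group counts, over all
translations `a`, the points `x` with `g (a * x) = g x`. -/
lemma sum_sq_fiber_eq_sum_mul_left {G K : Type*} [Group G] [Fintype G] [Fintype K]
    [DecidableEq K] (g : G → K) :
    ∑ b : K, (∑ u : G, if g u = b then (1 : ℤ) else 0) ^ 2 =
      ∑ a : G, ∑ u : G, if g (a * u) = g u then 1 else 0 := by
  calc ∑ b : K, (∑ u : G, if g u = b then (1 : ℤ) else 0) ^ 2
      = ∑ b : K, ∑ u : G, ∑ v : G, if g u = b then (if g v = b then (1 : ℤ) else 0) else 0 := by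
        simp only [sq, Finset.sum_mul_sum, ite_mul, one_mul, zero_mul]
    _ = ∑ u : G, ∑ v : G, if g v = g u then (1 : ℤ) else 0 := by
        rw [Finset.sum_comm]
        refine Finset.sum_congr rfl fun u _ => ?_
        rw [Finset.sum_comm]
        refine Finset.sum_congr rfl fun v _ => ?_
        simp
    _ = ∑ u : G, ∑ a : G, if g (a * u) = g u then (1 : ℤ) else 0 :=
        Finset.sum_congr rfl fun u _ =>
          (Equiv.sum_comp (Equiv.mulRight u) fun v => if g v = g u then (1 : ℤ) else 0).symm
    _ = _ := Finset.sum_comm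

/-- If `f` is difference balanced and `d_b` is the number of nonzero preimages of `b`,
then `Σ_{b ∈ K} d_b² = q^{2n−1} − 2q^{n−1} + 1`. -/
theorem stmt_1 {K L : Type*} [Field K] [Field L] [Algebra K L] [Fintype K] [Fintype L]
    (p m n q : ℕ) (hp : p.Prime) (hodd : Odd p) (hm : 1 ≤ m) (hn : 1 ≤ n)
    (hq : q = p ^ m) (hK : Fintype.card K = q) (hL : Fintype.card L = q ^ n)
    (f : L → K) (hf : IsDiffBalanced q n f) :
    ∑ b : K, (Nat.card {x : L | x ≠ 0 ∧ f x = b} : ℤ) ^ 2 =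
      (q : ℤ) ^ (2 * n - 1) - 2 * (q : ℤ) ^ (n - 1) + 1 := by
  classical
  have hqpos : 0 < q := hK ▸ Fintype.card_pos
  have hcard : (Fintype.card Lˣ : ℤ) = (q : ℤ) ^ n - 1 := by
    rw [Fintype.card_units, hL, Nat.cast_sub (Nat.one_le_pow _ _ hqpos)]
    simp
  have hshift : ∀ a : Lˣ, a ≠ 1 →
      (∑ u : Lˣ, if f ((a * u : Lˣ) : L) = f u then (1 : ℤ) else 0) =
        (q : ℤ) ^ (n - 1) - 1 := by
    intro a ha
    have h := (hf a a.ne_zero (by simpa using ha)).1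
    have h' := natCard_ne_zero_and_eq_sum_units fun x : L => f (a * x) - f x = 0
    rw [h, Nat.cast_sub (Nat.one_le_pow _ _ hqpos)] at h'
    simpa [sub_eq_zero] using h'.symm
  simp only [natCard_ne_zero_and_eq_sum_units]
  rw [sum_sq_fiber_eq_sum_mul_left fun u : Lˣ => f u,
    ← Finset.add_sum_erase _ _ (Finset.mem_univ (1 : Lˣ)),
    Finset.sum_congr rfl fun a ha => hshift a (Finset.ne_of_mem_erase ha),
    Finset.sum_const, Finset.card_erase_of_mem (Finset.mem_univ _), Finset.card_univ, nsmul_eq_mul,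
    Nat.cast_sub Fintype.card_pos, hcard]
  simp only [one_mul, if_true, Finset.sum_const, Finset.card_univ, nsmul_eq_mul, hcard]
  obtain ⟨k, rfl⟩ := Nat.exists_eq_add_of_le' hn
  rw [show 2 * (k + 1) - 1 = 2 * k + 1 by omega, Nat.add_sub_cancel]
  push_cast
  ring
end

section
/- Let p be an odd prime, q = p^m, and n ≥ 1. If f : L∖{0} → K is difference balanced and, for b ∈ K, d_b := |{x ∈ L∖{0} : f(x) = b}|, then the sum over all ordered pairs (b₁, b₂) ∈ K × K with b₁ ≠ b₂ of (d_{b₁} − d_{b₂})² equals 2(q − 1) (equivalently, the sum over unordered pairs equals q − 1). -/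
open Finset in
/-- Nonzero elements of a finite field with a given property correspond to units with it. -/
lemma natCard_ne_zero_eq_card_units {L : Type*} [Field L] [Fintype L] [Fintype Lˣ]
    (P : L → Prop) [DecidablePred fun u : Lˣ => P u] :
    Nat.card {x : L | x ≠ 0 ∧ P x} = #{u : Lˣ | P u} := by
  rw [← Fintype.card_subtype, ← Nat.card_eq_fintype_card]
  exact Nat.card_congr
    { toFun := fun x => ⟨Units.mk0 x.1 x.2.1, x.2.2⟩
      invFun := fun u => ⟨u.1, u.1.ne_zero, u.2⟩
      left_inv := fun _ => rfl
      right_inv := fun _ => Subtype.ext (Units.ext rfl) }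

open Finset in
/-- The squared fibre sizes of a function on a finite group sum to its total number of
coincidences under left translations. -/
lemma sum_card_fiber_sq {G K : Type*} [Group G] [Fintype G] [Fintype K] [DecidableEq K]
    (g : G → K) :
    ∑ b, #{x | g x = b} ^ 2 = ∑ a : G, #{x | g (a * x) = g x} := by
  have hshift (x : G) : ∑ a : G, (if g (a * x) = g x then 1 else 0) = #{y | g y = g x} := by
    rw [card_filter]
    exact Fintype.sum_equiv (Equiv.mulRight x) _ _ fun _ => rfl
  simp_rw [card_filter (fun x => g (_ * x) = g x)]
  rw [sum_comm]
  simp_rw [hshift]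
  rw [← sum_fiberwise univ g]
  refine sum_congr rfl fun b _ => ?_
  rw [sum_congr rfl (g := fun _ => #{x | g x = b}), sum_const, smul_eq_mul, sq]
  intro x hx
  rw [(mem_filter.mp hx).2]

/-- Lagrange's formula for the sum of squared differences over ordered pairs. -/
lemma sum_sum_sub_sq {ι R : Type*} [Fintype ι] [DecidableEq ι] [CommRing R] (d : ι → R) :
    ∑ i, ∑ j, (if i ≠ j then (d i - d j) ^ 2 else 0) =
      2 * (Fintype.card ι * ∑ i, d i ^ 2 - (∑ i, d i) ^ 2) := by
  have hdrop (i j : ι) : (if i ≠ j then (d i - d j) ^ 2 else 0) = (d i - d j) ^ 2 := by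
    split_ifs with h
    · rfl
    · simp [not_not.mp h]
  simp_rw [hdrop, sub_sq, Finset.sum_add_distrib, Finset.sum_sub_distrib, ← Finset.mul_sum,
    ← Finset.sum_mul, ← Finset.mul_sum, Finset.sum_const,
    Finset.card_univ, nsmul_eq_mul, ← Finset.mul_sum]
  ring

open Finset in
/-- If `f` is difference balanced and `d_b` is the number of nonzero preimages of `b`,
then the sum over ordered pairs `(b₁, b₂)` with `b₁ ≠ b₂` of `(d_{b₁} − d_{b₂})²`
equals `2(q − 1)`. -/
theorem stmt_2 {K L : Type*} [Field K] [Field L] [Algebra K L] [Fintype K] [Fintype L]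
    [DecidableEq K]
    (p m n q : ℕ) (hp : p.Prime) (hodd : Odd p) (hm : 1 ≤ m) (hn : 1 ≤ n)
    (hq : q = p ^ m) (hK : Fintype.card K = q) (hL : Fintype.card L = q ^ n)
    (f : L → K) (hf : IsDiffBalanced q n f) :
    ∑ b₁ : K, ∑ b₂ : K,
        (if b₁ ≠ b₂ then
          ((Nat.card {x : L | x ≠ 0 ∧ f x = b₁} : ℤ) -
            (Nat.card {x : L | x ≠ 0 ∧ f x = b₂} : ℤ)) ^ 2
        else 0) = 2 * ((q : ℤ) - 1) := by
  classical
  have hq_pos : 0 < q := hK ▸ Fintype.card_pos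
  have hG : (Fintype.card Lˣ : ℤ) = (q : ℤ) ^ n - 1 := by
    rw [Fintype.card_units, hL, Nat.cast_sub (Nat.one_le_pow _ _ hq_pos)]
    push_cast
    rfl
  have hpow : (q : ℤ) ^ n = q * (q : ℤ) ^ (n - 1) := by
    rw [← pow_succ', Nat.sub_add_cancel hn]
  have hcoinc (a : Lˣ) (ha : a ≠ 1) :
      (#{x : Lˣ | f (a * x : Lˣ) = f x} : ℤ) = (q : ℤ) ^ (n - 1) - 1 := by
    have h := (hf a a.ne_zero (by simpa using ha)).1
    simp_rw [sub_eq_zero] at h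
    rw [natCard_ne_zero_eq_card_units (fun x => f (a * x) = f x)] at h
    simp_rw [Units.val_mul, h, Nat.cast_sub (Nat.one_le_pow _ _ hq_pos)]
    push_cast
    rfl
  have hsq : ∑ b, (#{x : Lˣ | f x = b} : ℤ) ^ 2 =
      ((q : ℤ) ^ n - 1) + ((q : ℤ) ^ n - 2) * ((q : ℤ) ^ (n - 1) - 1) := by
    have h := congrArg (Nat.cast : ℕ → ℤ) (sum_card_fiber_sq fun x : Lˣ => f x)
    push_cast at h
    simp only [← Units.val_mul] at h
    rw [h, ← add_sum_erase _ _ (mem_univ (1 : Lˣ)),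
      sum_congr rfl fun a ha => hcoinc a (ne_of_mem_erase ha), sum_const, nsmul_eq_mul,
      card_erase_of_mem (mem_univ _), card_univ, Nat.cast_sub Fintype.card_pos, hG]
    simp only [one_mul, filter_true, card_univ, hG]
    push_cast
    ring
  have hsum : ∑ b, (#{x : Lˣ | f x = b} : ℤ) = (q : ℤ) ^ n - 1 := by
    rw [← hG, ← card_univ, card_eq_sum_card_fiberwise (f := fun x : Lˣ => f x) (t := univ)
      fun _ _ => mem_coe.mpr (mem_univ _)]
    push_cast
    rfl
  rw [sum_sum_sub_sq fun b => (Nat.card {x : L | x ≠ 0 ∧ f x = b} : ℤ)]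
  simp_rw [natCard_ne_zero_eq_card_units (fun x => f x = _)]
  rw [hsq, hsum, hK, hpow]
  ring
end

section
/- Let p be an odd prime, q = p^m, and n ≥ 2. If a difference balanced function f : L∖{0} → K is d-homogeneous, then f is two-tuple balanced. -/
/-- `f` is `d`-homogeneous: `gcd(d, q−1) = 1` and `f(cx) = c^d f(x)` for all
`c ∈ K∖{0}` and `x ∈ L∖{0}`. -/
def IsDHomogeneous {K L : Type*} [Field K] [Field L] [Algebra K L] (q d : ℕ)
    (f : L → K) : Prop :=
  Nat.Coprime d (q - 1) ∧
    ∀ c : K, c ≠ 0 → ∀ x : L, x ≠ 0 → f (algebraMap K L c * x) = c ^ d * f x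

/-- `N_{b₁,b₂}(a) = |{x ∈ L∖{0} : f(x) = b₁ and f(ax) = b₂}|`. -/
noncomputable def Ntt {K L : Type*} [Field K] [Field L] (f : L → K) (a : L) (b₁ b₂ : K) : ℕ :=
  Nat.card {x : L | x ≠ 0 ∧ f x = b₁ ∧ f (a * x) = b₂}

/-- `f` is two-tuple balanced. -/
def IsTwoTupleBalanced {K L : Type*} [Field K] [Field L] [Algebra K L] (q n : ℕ)
    (f : L → K) : Prop :=
  (∀ a : L, a ≠ 0 → (∀ c : K, algebraMap K L c ≠ a) →
      (Ntt f a 0 0 = q ^ (n - 2) - 1 ∧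
        ∀ b₁ b₂ : K, ¬(b₁ = 0 ∧ b₂ = 0) → Ntt f a b₁ b₂ = q ^ (n - 2))) ∧
  (∀ c : K, c ≠ 0 → ∃ μ : K,
      (∀ x : L, x ≠ 0 → f (algebraMap K L c * x) = μ * f x) ∧
      Ntt f (algebraMap K L c) 0 0 = q ^ (n - 1) - 1 ∧
      (∀ b₁ : K, b₁ ≠ 0 → Ntt f (algebraMap K L c) b₁ (μ * b₁) = q ^ (n - 1)) ∧
      (∀ b₁ b₂ : K, b₂ ≠ μ * b₁ → Ntt f (algebraMap K L c) b₁ b₂ = 0))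

open Finset in
/-- If two functions to a finite field have all nontrivial linear combinations equidistributed,
then counting along the lines through `(b₁, b₂)` determines the joint fibre. -/
theorem card_add_card_mul_card_fiber {K X : Type*} [Field K] [Fintype K] [Fintype X]
    [DecidableEq K] (g h : X → K) (M : ℕ) (hg : ∀ t, #{x | g x = t} = M)
    (hgh : ∀ s t, #{x | h x - s * g x = t} = M) (b₁ b₂ : K) :
    Fintype.card X + Fintype.card K * #{x | g x = b₁ ∧ h x = b₂} = (Fintype.card K + 1) * M := by
  have key : ∀ x, 1 + Fintype.card K * (if g x = b₁ ∧ h x = b₂ then 1 else 0) =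
      (∑ s : K, if h x - s * g x = b₂ - s * b₁ then 1 else 0) + if g x = b₁ then 1 else 0 := by
    intro x
    by_cases h₁ : g x = b₁
    · by_cases h₂ : h x = b₂ <;> simp [h₁, h₂, add_comm]
    · have hs : ∀ s : K, h x - s * g x = b₂ - s * b₁ ↔ s = (h x - b₂) / (g x - b₁) := by
        intro s
        rw [eq_div_iff (sub_ne_zero.mpr h₁)]
        constructor <;> intro h <;> linear_combination -h
      simp [h₁, hs]
  have hsum := Finset.sum_congr (rfl : (univ : Finset X) = univ) fun x _ => key x
  rw [sum_add_distrib, sum_add_distrib, ← mul_sum, sum_comm] at hsum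
  simp only [← card_filter, hgh, hg] at hsum
  simpa [add_mul] using hsum

open Finset in
theorem card_filter_eq_natCard_ne_zero {L : Type*} [Zero L] [Fintype L] (P : L → Prop)
    [DecidablePred P] :
    #{x | P x} = Nat.card {x : L | x ≠ 0 ∧ P x} + if P 0 then 1 else 0 := by
  classical
  rw [Set.coe_ofPred, Nat.card_eq_fintype_card, Fintype.card_subtype]
  have h : ({x | x ≠ 0 ∧ P x} : Finset L) = ({x | P x} : Finset L).erase 0 := by ext; simp
  rw [h]
  split_ifs with h0
  · exact (card_erase_add_one (by simpa using h0)).symm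
  · rw [erase_eq_of_notMem (by simpa using h0), add_zero]

open Finset in
theorem IsBalanced.card_filter_eq {K L : Type*} [Field K] [Field L] [Fintype L] [DecidableEq K]
    {q n : ℕ} {f g : L → K} (hq : 0 < q) (hf : IsBalanced q n f) (h0 : g 0 = 0)
    (hg : ∀ x ≠ 0, g x = f x) (b : K) : #{x | g x = b} = q ^ (n - 1) := by
  have hset : {x : L | x ≠ 0 ∧ g x = b} = {x : L | x ≠ 0 ∧ f x = b} := by
    ext x
    exact and_congr_right fun hx => by rw [hg x hx]
  rw [card_filter_eq_natCard_ne_zero, hset, h0]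
  by_cases hb : b = 0
  · subst hb
    rw [hf.1, if_pos rfl, Nat.sub_add_cancel (Nat.pow_pos hq)]
  · rw [hf.2 b hb, if_neg (Ne.symm hb), add_zero]

theorem exists_pow_eq_of_coprime {K : Type*} [Field K] [Fintype K] {d : ℕ}
    (hd : d.Coprime (Fintype.card K - 1)) {s : K} (hs : s ≠ 0) : ∃ c : K, c ≠ 0 ∧ c ^ d = s := by
  have hcard : (Nat.card Kˣ).Coprime d := by
    rw [Nat.card_units, Nat.card_eq_fintype_card]
    exact hd.symm
  obtain ⟨c, hc⟩ := (powCoprime hcard).surjective (Units.mk0 s hs)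
  exact ⟨c, c.ne_zero, by simpa using congrArg Units.val hc⟩

/-- If a difference balanced function `f : L∖{0} → K` is `d`-homogeneous,
then `f` is two-tuple balanced. -/
theorem stmt_4 {K L : Type*} [Field K] [Field L] [Algebra K L] [Fintype K] [Fintype L]
    (p m n q : ℕ) (hp : p.Prime) (hodd : Odd p) (hm : 1 ≤ m) (hn : 2 ≤ n)
    (hq : q = p ^ m) (hK : Fintype.card K = q) (hL : Fintype.card L = q ^ n)
    (f : L → K) (hf : IsDiffBalanced q n f)
    (d : ℕ) (hd : IsDHomogeneous q d f) :
    IsTwoTupleBalanced q n f := by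
  classical
  obtain ⟨hcop, hhom⟩ := hd
  have hq3 : 3 ≤ q := by
    have hp3 : 3 ≤ p := by
      have := hp.two_le
      obtain ⟨k, rfl⟩ := hodd
      omega
    exact hq ▸ hp3.trans (Nat.le_self_pow (by omega) p)
  have hq0 : 0 < q := by omega
  let g : L → K := Function.update f 0 0
  have g0 : g 0 = 0 := Function.update_self ..
  have gne : ∀ x ≠ 0, g x = f x := fun x hx => Function.update_of_ne hx ..
  have ghom : ∀ c : K, c ≠ 0 → ∀ x, g (algebraMap K L c * x) = c ^ d * g x := by
    intro c hc x
    by_cases hx : x = 0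
    · simp [hx, g0]
    · rw [gne _ (by simp [hc, hx]), gne x hx, hhom c hc x hx]
  have gdiff : ∀ a : L, a ≠ 0 → a ≠ 1 → ∀ b,
      (Finset.univ.filter fun x => g (a * x) - g x = b).card = q ^ (n - 1) := by
    intro a ha ha1
    refine (hf a ha ha1).card_filter_eq hq0 (by simp [g0]) fun x hx => ?_
    rw [gne x hx, gne _ (mul_ne_zero ha hx)]
  have gcard : ∀ b, (Finset.univ.filter fun x => g x = b).card = q ^ (n - 1) := by
    intro b
    obtain ⟨s, hs0, hs1⟩ : ∃ s : K, s ≠ 0 ∧ s ≠ 1 := by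
      obtain ⟨s, hs⟩ := Finset.exists_mem_notMem_of_card_lt_card
        (s := {0, 1}) (t := (Finset.univ : Finset K))
        ((Finset.card_le_two).trans_lt (by rw [Finset.card_univ, hK]; omega))
      exact ⟨s, by simpa using hs⟩
    obtain ⟨c, hc, rfl⟩ := exists_pow_eq_of_coprime (hK ▸ hcop) hs0
    have hc1 : c ≠ 1 := by rintro rfl; simp at hs1
    rw [← gdiff (algebraMap K L c) (by simpa using hc)
      (by simpa using (algebraMap K L).injective.ne hc1) ((c ^ d - 1) * b)]
    congr 1
    ext x
    rw [Finset.mem_filter_univ, Finset.mem_filter_univ, ghom c hc, ← sub_one_mul]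
    exact (mul_right_inj' (sub_ne_zero.mpr hs1)).symm
  have Ng : ∀ a : L, a ≠ 0 → ∀ b₁ b₂ : K,
      (Finset.univ.filter fun x => g x = b₁ ∧ g (a * x) = b₂).card =
        Ntt f a b₁ b₂ + if b₁ = 0 ∧ b₂ = 0 then 1 else 0 := by
    intro a ha b₁ b₂
    rw [card_filter_eq_natCard_ne_zero, Ntt]
    congr 2
    · congr! 3 with x
      refine and_congr_right fun hx => ?_
      rw [gne x hx, gne _ (mul_ne_zero ha hx)]
    · simp [g0, eq_comm]
  refine ⟨fun a ha haK => ?_, fun c hc => ?_⟩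
  · have hmain : ∀ b₁ b₂ : K,
        (Finset.univ.filter fun x => g x = b₁ ∧ g (a * x) = b₂).card = q ^ (n - 2) := by
      intro b₁ b₂
      have h := card_add_card_mul_card_fiber g (fun x => g (a * x)) (q ^ (n - 1)) gcard ?_ b₁ b₂
      · rw [hK, hL] at h
        obtain ⟨k, rfl⟩ := Nat.exists_eq_add_of_le' hn
        simp only [Nat.add_sub_cancel, show k + 2 - 1 = k + 1 by omega] at h ⊢
        refine Nat.eq_of_mul_eq_mul_left hq0 ?_
        ring_nf at h ⊢
        omega
      · intro s t
        by_cases hs : s = 0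
        · subst hs
          rw [← gcard t]
          refine Finset.card_equiv (Equiv.mulLeft₀ a ha) fun x => ?_
          simp
        · obtain ⟨c, hc, hcs⟩ := exists_pow_eq_of_coprime (hK ▸ hcop) (inv_ne_zero hs)
          have hcL : algebraMap K L c ≠ 0 := by simpa using hc
          have hca : algebraMap K L c * a ≠ 1 := fun h =>
            haK c⁻¹ (by rw [map_inv₀]; exact (eq_inv_of_mul_eq_one_right h).symm)
          rw [← gdiff _ (mul_ne_zero hcL ha) hca (s⁻¹ * t)]
          congr 1
          ext x
          rw [Finset.mem_filter_univ, Finset.mem_filter_univ, mul_assoc, ghom c hc, hcs,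
            ← mul_right_inj' (inv_ne_zero hs), mul_sub, inv_mul_cancel_left₀ hs]
    have hN := fun b₁ b₂ => (Ng a ha b₁ b₂).symm.trans (hmain b₁ b₂)
    refine ⟨?_, fun b₁ b₂ hb => ?_⟩
    · have := hN 0 0
      rw [if_pos ⟨rfl, rfl⟩] at this
      omega
    · simpa [hb] using hN b₁ b₂
  · have hcL : algebraMap K L c ≠ 0 := by simpa using hc
    have hcd : c ^ d ≠ 0 := pow_ne_zero d hc
    have hN : ∀ b, Ntt f (algebraMap K L c) b (c ^ d * b) + (if b = 0 then 1 else 0) =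
        q ^ (n - 1) := by
      intro b
      have h := Ng _ hcL b (c ^ d * b)
      rw [← gcard b]
      simp only [ghom c hc] at h
      convert h.symm using 2
      · simp +contextual [hcd]
      · congr 1
        ext x
        simp +contextual
    refine ⟨c ^ d, hhom c hc, ?_, fun b hb => ?_, fun b₁ b₂ hb => ?_⟩
    · have := hN 0
      rw [mul_zero, if_pos rfl] at this
      omega
    · simpa [hb] using hN b
    · rw [Ntt, Nat.card_eq_zero]
      refine Or.inl ⟨?_⟩
      rintro ⟨x, hx, rfl, h⟩
      exact hb (h.symm.trans (hhom c hc x hx))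
end

section
/- Let p be an odd prime, q = p^m, and n ≥ 2. If f : L∖{0} → K is surjective onto K and two-tuple balanced, then f is d-homogeneous: there exists an integer d with gcd(d, q−1) = 1 such that f(cx) = c^d f(x) for all x ∈ L∖{0} and all c ∈ K∖{0}. -/
/-- A finite set of nonzero elements stable under multiplication by an element of prime order `r`
has cardinality divisible by `r`. -/
theorem prime_dvd_card_of_mul_mem {L : Type*} [Field L] [Finite L] {r : ℕ} (hr : r.Prime)
    {c : L} (hc : c ≠ 1) (hcr : c ^ r = 1) (S : Set L) (h0 : ∀ x ∈ S, x ≠ 0)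
    (hS : ∀ x ∈ S, c * x ∈ S) : r ∣ Nat.card S := by
  classical
  have := Fintype.ofFinite L
  have : Fact r.Prime := ⟨hr⟩
  let σ : Function.End S := fun x => ⟨c * x, hS x x.2⟩
  have hpow : ∀ k (x : S), ((σ ^ k) x : L) = c ^ k * x := by
    intro k
    induction k with
    | zero => intro x; rw [pow_zero, pow_zero, one_mul]; rfl
    | succ k ih =>
      intro x
      rw [pow_succ, pow_succ, mul_assoc]
      exact ih (σ x)
  have hσ : σ ^ r ^ 1 = 1 := by
    funext x
    apply Subtype.ext
    rw [hpow, pow_one, hcr, one_mul]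
    rfl
  have hmod := Equiv.Perm.card_fixedPoints_modEq hσ
  have hempty : IsEmpty (Function.fixedPoints σ) := by
    refine ⟨fun ⟨x, hx⟩ => hc ?_⟩
    have hx' : c * (x : L) = x := congrArg Subtype.val hx
    exact mul_right_cancel₀ (h0 x x.2) (hx'.trans (one_mul _).symm)
  rw [Fintype.card_eq_zero (α := Function.fixedPoints σ)] at hmod
  rw [Nat.card_eq_fintype_card]
  exact (Nat.modEq_zero_iff_dvd).1 hmod

/-- If `f : L∖{0} → K` is surjective onto `K` and two-tuple balanced, then `f` is
`d`-homogeneous for some `d` with `gcd(d, q−1) = 1`. -/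
theorem stmt_5 {K L : Type*} [Field K] [Field L] [Algebra K L] [Fintype K] [Fintype L]
    (p m n q : ℕ) (hp : p.Prime) (hodd : Odd p) (hm : 1 ≤ m) (hn : 2 ≤ n)
    (hq : q = p ^ m) (hK : Fintype.card K = q) (hL : Fintype.card L = q ^ n)
    (f : L → K) (hsurj : ∀ b : K, ∃ x : L, x ≠ 0 ∧ f x = b)
    (hf : IsTwoTupleBalanced q n f) :
    ∃ d : ℕ, IsDHomogeneous q d f := by
  have hq2 : 1 < q := hK ▸ Fintype.one_lt_card
  obtain ⟨a, ha⟩ : ∃ a : L, ∀ c : K, algebraMap K L c ≠ a := by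
    by_contra! h
    have hle := Fintype.card_le_of_surjective (algebraMap K L) h
    rw [hK, hL] at hle
    exact absurd hle (not_le.2 (lt_self_pow₀ hq2 (by omega)))
  have ha0 : a ≠ 0 := fun h => ha 0 (by rw [map_zero, h])
  have hN : Ntt f a 1 1 = q ^ (n - 2) := (hf.1 a ha0 ha).2 1 1 (by simp)
  obtain ⟨g, hg⟩ := IsCyclic.exists_generator (α := Kˣ)
  obtain ⟨μ, hμ, -⟩ := hf.2 g g.ne_zero
  have hgL : algebraMap K L g ≠ 0 := by simp
  have hμ0 : μ ≠ 0 := by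
    rintro rfl
    obtain ⟨z, hz, hz1⟩ := hsurj 1
    have h := hμ ((algebraMap K L g)⁻¹ * z) (mul_ne_zero (inv_ne_zero hgL) hz)
    rw [mul_inv_cancel_left₀ hgL, hz1, zero_mul] at h
    exact one_ne_zero h
  obtain ⟨d, hd⟩ := (mem_powers_iff_mem_zpowers).2 (hg (Units.mk0 μ hμ0))
  have hd' : μ = (g : K) ^ d := by
    simpa using (congrArg Units.val hd).symm
  have hpow : ∀ (k : ℕ) (x : L), x ≠ 0 →
      f (algebraMap K L ((g : K) ^ k) * x) = ((g : K) ^ k) ^ d * f x := by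
    intro k
    induction k with
    | zero => intro x _; simp
    | succ k ih =>
      intro x hx
      rw [pow_succ, map_mul, mul_assoc, ih _ (mul_ne_zero hgL hx), hμ x hx, hd', mul_pow,
        mul_assoc]
  have hhom : ∀ c : K, c ≠ 0 → ∀ x : L, x ≠ 0 →
      f (algebraMap K L c * x) = c ^ d * f x := by
    intro c hc
    obtain ⟨k, hk⟩ := (mem_powers_iff_mem_zpowers).2 (hg (Units.mk0 c hc))
    have hk' : (g : K) ^ k = c := by simpa using congrArg Units.val hk
    exact hk' ▸ hpow k
  refine ⟨d, Nat.coprime_of_dvd fun r hr hrd hrq => ?_, hhom⟩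
  have : Fact r.Prime := ⟨hr⟩
  classical
  obtain ⟨u, hu⟩ := exists_prime_orderOf_dvd_card (G := Kˣ) r
    (by rwa [Fintype.card_units, hK])
  have hu1 : (u : K) ≠ 1 := by
    intro h
    rw [Units.val_eq_one.1 h, orderOf_one] at hu
    exact hr.one_lt.ne hu
  have hur : (u : K) ^ r = 1 := by
    rw [← Units.val_pow_eq_pow_val, ← hu, pow_orderOf_eq_one, Units.val_one]
  have hinv : ∀ x : L, x ≠ 0 → f (algebraMap K L u * x) = f x := by
    intro x hx
    obtain ⟨e, rfl⟩ := hrd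
    rw [hhom u u.ne_zero x hx, pow_mul, hur, one_pow, one_mul]
  have hdvd : r ∣ Ntt f a 1 1 := by
    refine prime_dvd_card_of_mul_mem hr (c := algebraMap K L u) ?_ ?_ _ (fun x hx => hx.1) ?_
    · exact fun h => hu1 ((algebraMap K L).injective (h.trans (map_one _).symm))
    · rw [← map_pow, hur, map_one]
    · rintro x ⟨hx, h1, h2⟩
      refine ⟨mul_ne_zero (by simp) hx, (hinv x hx).trans h1, ?_⟩
      rw [mul_left_comm, hinv _ (mul_ne_zero ha0 hx), h2]
  rw [hN] at hdvd
  have hrq' : r ∣ q := hr.dvd_of_dvd_pow hdvd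
  have h1 : r ∣ 1 := by
    have h := Nat.dvd_sub hrq' hrq
    rwa [Nat.sub_sub_self hq2.le] at h
  exact hr.one_lt.ne' (Nat.dvd_one.1 h1)
end

section
/- Let p be an odd prime, q = p^m, and n ≥ 1. If f : L∖{0} → K is surjective onto K, difference balanced, and d-homogeneous, then for every t ∈ K∖{0} there exists a ∈ L∖{0} such that {(x, t·f(x)) : x ∈ L∖{0}} = {(a·x, f(x)) : x ∈ L∖{0}} as subsets of L × K; that is, each pair (1, t) with t ∈ K∖{0} is a multiplier of the graph D = {(x, f(x)) : x ∈ L∖{0}} with D^{(1,t)} = (a,0)D. -/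
/-- If `f : L∖{0} → K` is surjective onto `K`, difference balanced and `d`-homogeneous,
then for every `t ∈ K∖{0}` there is `a ∈ L∖{0}` with
`{(x, t·f(x))} = {(a·x, f(x))}`, i.e. `(1,t)` is a multiplier of the graph of `f`. -/
theorem stmt_6 {K L : Type*} [Field K] [Field L] [Algebra K L] [Fintype K] [Fintype L]
    (p m n q : ℕ) (hp : p.Prime) (hodd : Odd p) (hm : 1 ≤ m) (hn : 1 ≤ n)
    (hq : q = p ^ m) (hK : Fintype.card K = q) (hL : Fintype.card L = q ^ n)
    (f : L → K) (hsurj : ∀ b : K, ∃ x : L, x ≠ 0 ∧ f x = b)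
    (hf : IsDiffBalanced q n f) (d : ℕ) (hd : IsDHomogeneous q d f) :
    ∀ t : K, t ≠ 0 → ∃ a : L, a ≠ 0 ∧
      {pr : L × K | ∃ x : L, x ≠ 0 ∧ pr = (x, t * f x)} =
        {pr : L × K | ∃ x : L, x ≠ 0 ∧ pr = (a * x, f x)} := by
  obtain ⟨hcop, hhom⟩ := hd
  intro t ht
  have hcard : (Nat.card Kˣ).Coprime d := by
    rw [Nat.card_units, Nat.card_eq_fintype_card, hK]
    exact hcop.symm
  obtain ⟨c, hc⟩ := (powCoprime hcard).surjective (Units.mk0 t ht)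
  have hcd : (c : K) ^ d = t := by
    simpa using congrArg Units.val hc
  have hc0 : algebraMap K L c ≠ 0 := by simp
  refine ⟨(algebraMap K L c)⁻¹, inv_ne_zero hc0, Set.ext fun pr => ⟨?_, ?_⟩⟩
  · rintro ⟨x, hx, rfl⟩
    exact ⟨algebraMap K L c * x, mul_ne_zero hc0 hx, by
      rw [inv_mul_cancel_left₀ hc0, hhom c c.ne_zero x hx, hcd]⟩
  · rintro ⟨x, hx, rfl⟩
    have hx' : (algebraMap K L c)⁻¹ * x ≠ 0 := mul_ne_zero (inv_ne_zero hc0) hx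
    exact ⟨_, hx', by
      rw [← hcd, ← hhom c c.ne_zero _ hx', mul_inv_cancel_left₀ hc0]⟩
end

section
/- Let p be an odd prime, q = p^m, and n ≥ 1. Suppose f : L∖{0} → K is surjective onto K and difference balanced, and suppose that for every t ∈ K∖{0} there exists a ∈ L∖{0} such that {(x, t·f(x)) : x ∈ L∖{0}} = {(a·x, f(x)) : x ∈ L∖{0}} as subsets of L × K. Then f is d-homogeneous: there exists an integer d with gcd(d, q−1) = 1 such that f(cx) = c^d f(x) for all x ∈ L∖{0} and all c ∈ K∖{0}. -/
/-- The elements of `Lˣ` of exponent `|K| - 1` are the nonzero elements of the subfield `K`. -/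
lemma exists_algebraMap_eq_of_pow_card_sub_one {K L : Type*} [Field K] [Field L] [Algebra K L]
    [Fintype K] [Fintype L] (x : Lˣ) (hx : x ^ (Fintype.card K - 1) = 1) :
    ∃ c : Kˣ, algebraMap K L c = x := by
  classical
  let φ : Kˣ →* Lˣ := Units.map (algebraMap K L : K →* L)
  have hφ : Function.Injective φ := Units.map_injective (algebraMap K L).injective
  have hsub : Finset.univ.image φ ⊆ ({a : Lˣ | a ^ (Fintype.card K - 1) = 1} : Finset Lˣ) := by
    intro a ha
    obtain ⟨c, -, rfl⟩ := Finset.mem_image.1 ha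
    simp [← map_pow, ← Fintype.card_units]
  have hle : ({a : Lˣ | a ^ (Fintype.card K - 1) = 1} : Finset Lˣ).card ≤
      (Finset.univ.image φ).card := by
    rw [Finset.card_image_of_injective _ hφ, Finset.card_univ, Fintype.card_units]
    exact IsCyclic.card_pow_eq_one_le (by have := Fintype.one_lt_card (α := K); omega)
  have hmem : x ∈ Finset.univ.image φ := by
    rw [Finset.eq_of_subset_of_card_le hsub hle]
    simpa using hx
  obtain ⟨c, -, hc⟩ := Finset.mem_image.1 hmem
  exact ⟨c, congrArg Units.val hc⟩

/-- An automorphism of a finite cyclic group is `g ↦ g ^ d` with `d` prime to the group order. -/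
lemma MulEquiv.exists_eq_pow_coprime {G : Type*} [Group G] [Finite G] [IsCyclic G] (χ : G ≃* G) :
    ∃ d : ℕ, d.Coprime (Nat.card G) ∧ ∀ g, χ g = g ^ d := by
  obtain ⟨g, hg⟩ := IsCyclic.exists_generator (α := G)
  obtain ⟨d, hd⟩ := (mem_powers_iff_mem_zpowers (x := g)).2 (hg (χ g))
  have hd : g ^ d = χ g := hd
  refine ⟨d, ?_, fun h => ?_⟩
  · have hord := MulEquiv.orderOf_eq χ g
    rw [← hd, orderOf_pow, orderOf_eq_card_of_forall_mem_zpowers hg] at hord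
    rw [Nat.Coprime, Nat.gcd_comm]
    exact ((Nat.div_eq_self).1 hord).resolve_left Nat.card_pos.ne'
  · obtain ⟨k, rfl⟩ := hg h
    simp only [map_zpow, ← hd]
    rw [← zpow_natCast, ← zpow_natCast, ← zpow_mul, ← zpow_mul, mul_comm]

/-- Distinct dilates of a difference balanced function are distinct. -/
lemma IsDiffBalanced.eq_of_comp_mul_eq {K L : Type*} [Field K] [Field L] [Fintype L] {q n : ℕ}
    (hq : 2 ≤ q) (hn : 1 ≤ n) (hL : Fintype.card L = q ^ n) {f : L → K}
    (hf : IsDiffBalanced q n f) {a b : L} (ha : a ≠ 0) (hb : b ≠ 0)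
    (h : ∀ x, x ≠ 0 → f (a * x) = f (b * x)) : a = b := by
  by_contra hab
  have hcard := (hf (a / b) (div_ne_zero ha hb) (by rwa [ne_eq, div_eq_one_iff_eq hb])).1
  have hset : {x : L | x ≠ 0 ∧ f (a / b * x) - f x = 0} = {0}ᶜ := by
    ext x
    simp only [Set.mem_ofPred_eq, Set.mem_compl_iff, Set.mem_singleton_iff, and_iff_left_iff_imp]
    intro hx
    have := h (x / b) (div_ne_zero hx hb)
    rw [mul_div_cancel₀ _ hb] at this
    rw [← this, sub_eq_zero]
    congr 1
    ring
  rw [hset, Nat.card_coe_set_eq, Set.ncard_compl, Set.ncard_singleton, Nat.card_eq_fintype_card,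
    hL] at hcard
  have hlt : q ^ (n - 1) < q ^ n := Nat.pow_lt_pow_right (by omega) (by omega)
  have hpos : 0 < q ^ (n - 1) := by positivity
  omega

/-- If `f : L∖{0} → K` is surjective onto `K`, difference balanced, and every `(1,t)`
with `t ∈ K∖{0}` is a multiplier of the graph of `f` (via a translate `(a,0)`),
then `f` is `d`-homogeneous for some `d` with `gcd(d, q−1) = 1`. -/
theorem stmt_7 {K L : Type*} [Field K] [Field L] [Algebra K L] [Fintype K] [Fintype L]
    (p m n q : ℕ) (hp : p.Prime) (hodd : Odd p) (hm : 1 ≤ m) (hn : 1 ≤ n)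
    (hq : q = p ^ m) (hK : Fintype.card K = q) (hL : Fintype.card L = q ^ n)
    (f : L → K) (hsurj : ∀ b : K, ∃ x : L, x ≠ 0 ∧ f x = b)
    (hf : IsDiffBalanced q n f)
    (hmult : ∀ t : K, t ≠ 0 → ∃ a : L, a ≠ 0 ∧
      {pr : L × K | ∃ x : L, x ≠ 0 ∧ pr = (x, t * f x)} =
        {pr : L × K | ∃ x : L, x ≠ 0 ∧ pr = (a * x, f x)}) :
    ∃ d : ℕ, IsDHomogeneous q d f := by
  have hq2 : 2 ≤ q := hK ▸ Fintype.one_lt_card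
  have huniq : ∀ a b : L, a ≠ 0 → b ≠ 0 → (∀ x, x ≠ 0 → f (a * x) = f (b * x)) → a = b :=
    fun a b ha hb => hf.eq_of_comp_mul_eq hq2 hn hL ha hb
  have hscale : ∀ t : Kˣ, ∃ c : Kˣ, ∀ x, x ≠ 0 → f (algebraMap K L c * x) = t * f x := by
    intro t
    obtain ⟨a, ha, hset⟩ := hmult (t⁻¹ : Kˣ) (Units.ne_zero _)
    have hfa : ∀ x, x ≠ 0 → f (a * x) = t * f x := by
      intro x hx
      have hmem : (a * x, f x) ∈ {pr : L × K | ∃ x : L, x ≠ 0 ∧ pr = (a * x, f x)} := ⟨x, hx, rfl⟩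
      rw [← hset] at hmem
      obtain ⟨y, -, hy⟩ := hmem
      obtain ⟨rfl, hfx⟩ := Prod.mk.inj hy
      rw [hfx, Units.mul_inv_cancel_left]
    have hpow : ∀ (k : ℕ) (x : L), x ≠ 0 → f (a ^ k * x) = t ^ k * f x := by
      intro k
      induction k with
      | zero => simp
      | succ k ih =>
        intro x hx
        rw [pow_succ, mul_assoc, ih _ (mul_ne_zero ha hx), hfa x hx, pow_succ, mul_assoc]
    have ha1 : a ^ (Fintype.card K - 1) = 1 := by
      refine huniq _ _ (pow_ne_zero _ ha) one_ne_zero fun x hx => ?_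
      rw [hpow _ x hx, FiniteField.pow_card_sub_one_eq_one _ t.ne_zero, one_mul, one_mul]
    obtain ⟨c, hc⟩ := exists_algebraMap_eq_of_pow_card_sub_one (K := K) (Units.mk0 a ha)
      (Units.ext (by simpa using ha1))
    exact ⟨c, fun x hx => by rw [hc, Units.val_mk0, hfa x hx]⟩
  choose s hs using hscale
  have hne : ∀ c : Kˣ, algebraMap K L c ≠ 0 := fun c => by simp
  have hmul : ∀ t u, s (t * u) = s t * s u := by
    intro t u
    refine Units.ext ((algebraMap K L).injective
      (huniq _ _ (hne _) (hne _) fun x hx => ?_))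
    rw [hs _ x hx, Units.val_mul, Units.val_mul, map_mul, mul_assoc, mul_assoc,
      hs t _ (mul_ne_zero (hne _) hx), hs u x hx]
  have hinj : Function.Injective s := by
    intro t u htu
    obtain ⟨x, hx, hfx⟩ := hsurj 1
    have h := hs t x hx
    rw [htu, hs u x hx, hfx, mul_one, mul_one] at h
    exact Units.ext h.symm
  let ψ : Kˣ ≃* Kˣ := MulEquiv.ofBijective (MonoidHom.mk' s hmul)
    (Finite.injective_iff_bijective.1 hinj)
  obtain ⟨d, hcop, hd⟩ := ψ.symm.exists_eq_pow_coprime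
  rw [Nat.card_units, Nat.card_eq_fintype_card, hK] at hcop
  refine ⟨d, hcop, fun c hc x hx => ?_⟩
  have h := hs (ψ.symm (Units.mk0 c hc)) x hx
  have hψ : s (ψ.symm (Units.mk0 c hc)) = Units.mk0 c hc := ψ.apply_symm_apply _
  rwa [hψ, hd, Units.val_pow_eq_pow_val, Units.val_mk0] at h
end

section
/- Let p be an odd prime, q = p^m, and n ≥ 2. If f : L∖{0} → K is surjective onto K and two-tuple balanced, then for every b ∈ K∖{0} the preimage D_b := {x ∈ L∖{0} : f(x) = b}, viewed as a subset of the multiplicative group L^×, is a ((q^n−1)/(q−1), q−1, q^{n−1}, q^{n−2}) relative difference set relative to the subgroup K^× (the image of K∖{0} in L^×). -/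
/-- `D ⊆ G` is an `(m, n, k, λ)` relative difference set relative to the subgroup `N`:
`|G| = mn`, `|N| = n`, `|D| = k`, every `g ∉ N` has exactly `λ` representations
`g = d₁d₂⁻¹` with `d₁, d₂ ∈ D`, and every `g ∈ N`, `g ≠ 1`, has none. -/
def IsRelDiffSet {G : Type*} [Group G] (D : Set G) (N : Subgroup G)
    (m n k lam : ℕ) : Prop :=
  Nat.card G = m * n ∧ Nat.card N = n ∧ Nat.card D = k ∧
    (∀ g : G, g ∉ N →
      Nat.card {pq : G × G // pq.1 ∈ D ∧ pq.2 ∈ D ∧ pq.1 * pq.2⁻¹ = g} = lam) ∧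
    (∀ g : G, g ∈ N → g ≠ 1 →
      Nat.card {pq : G × G // pq.1 ∈ D ∧ pq.2 ∈ D ∧ pq.1 * pq.2⁻¹ = g} = 0)

/-- A set stable under left translation by a subgroup is a union of cosets, so its size is
divisible by the order of the subgroup. -/
theorem card_subgroup_dvd_card_of_mul_mem {G : Type*} [CommGroup G] (H : Subgroup G) (D : Set G)
    (hD : ∀ h ∈ H, ∀ x ∈ D, h * x ∈ D) : Nat.card H ∣ Nat.card D := by
  have hsat : (QuotientGroup.mk : G → G ⧸ H) ⁻¹' (QuotientGroup.mk '' D) = D := by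
    ext x
    constructor
    · rintro ⟨y, hy, hxy⟩
      have h := hD _ (QuotientGroup.eq.mp hxy) y hy
      rwa [mul_comm, mul_inv_cancel_left] at h
    · intro hx
      exact ⟨x, hx, rfl⟩
  have hcard := Nat.card_congr
    (QuotientGroup.preimageMkEquivSubgroupProdSet H (QuotientGroup.mk '' D))
  rw [hsat, Nat.card_prod] at hcard
  exact ⟨_, hcard⟩

/-- Representations of a unit `g` as a quotient of elements of `D_b` are counted by
`N_{b,b}(g)`. -/
theorem card_quotient_representations_eq_Ntt {K L : Type*} [Field K] [Field L] (f : L → K) (b : K)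
    (g : Lˣ) :
    Nat.card {pq : Lˣ × Lˣ // pq.1 ∈ {u : Lˣ | f (u : L) = b} ∧
      pq.2 ∈ {u : Lˣ | f (u : L) = b} ∧ pq.1 * pq.2⁻¹ = g} = Ntt f (g : L) b b := by
  refine Nat.card_congr
    { toFun := fun pq => ⟨(pq.1.2 : L), pq.1.2.ne_zero, pq.2.2.1, ?_⟩
      invFun := fun x => ⟨(g * Units.mk0 x.1 x.2.1, Units.mk0 x.1 x.2.1), ?_, ?_, ?_⟩
      left_inv := ?_
      right_inv := ?_ }
  · obtain ⟨⟨u, v⟩, hu, hv, rfl⟩ := pq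
    simpa using hu
  · simpa using x.2.2.2
  · simpa using x.2.2.1
  · simp
  · rintro ⟨⟨u, v⟩, hu, hv, rfl⟩
    simp
  · intro x
    simp

/-- The size of `D_b` in the unit group is `N_{b,b}(1)`. -/
theorem card_preimage_units_eq_Ntt_one {K L : Type*} [Field K] [Field L] (f : L → K) (b : K) :
    Nat.card {u : Lˣ | f (u : L) = b} = Ntt f (1 : L) b b := by
  refine Nat.card_congr
    { toFun := fun u => ⟨(u.1 : L), u.1.ne_zero, u.2, ?_⟩
      invFun := fun x => ⟨Units.mk0 x.1 x.2.1, x.2.2.1⟩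
      left_inv := ?_
      right_inv := ?_ }
  · rw [one_mul]
    exact u.2
  · intro u
    simp
  · intro x
    simp

/-- Every fibre of a surjective two-tuple balanced function over a nonzero value has
`q ^ (n - 1)` elements. -/
theorem IsTwoTupleBalanced.card_preimage_units {K L : Type*} [Field K] [Field L] [Algebra K L]
    {q n : ℕ} {f : L → K} (hf : IsTwoTupleBalanced q n f)
    (hsurj : ∀ b : K, ∃ x : L, x ≠ 0 ∧ f x = b) {b : K} (hb : b ≠ 0) :
    Nat.card {u : Lˣ | f (u : L) = b} = q ^ (n - 1) := by
  obtain ⟨μ, hμ, -, hcard, -⟩ := hf.2 1 one_ne_zero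
  obtain ⟨x, hx, hxb⟩ := hsurj b
  have hμb : μ * b = b := by simpa [hxb] using (hμ x hx).symm
  have h := hcard b hb
  rwa [hμb, map_one, ← card_preimage_units_eq_Ntt_one] at h

/-- A scalar under which a surjective two-tuple balanced function is invariant is trivial: its
order divides both `q - 1` and the fibre size `q ^ (n - 1)`. -/
theorem IsTwoTupleBalanced.eq_one_of_invariant {K L : Type*} [Field K] [Field L] [Algebra K L]
    [Fintype K] {q n : ℕ} (hK : Fintype.card K = q) {f : L → K}
    (hf : IsTwoTupleBalanced q n f) (hsurj : ∀ b : K, ∃ x : L, x ≠ 0 ∧ f x = b) (c : Kˣ)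
    (hc : ∀ x : L, x ≠ 0 → f (algebraMap K L c * x) = f x) : c = 1 := by
  classical
  set φ : Kˣ →* Lˣ := Units.map (algebraMap K L).toMonoidHom
  have hinj : Function.Injective φ := Units.map_injective (algebraMap K L).injective
  have hstable : ∀ h ∈ Subgroup.zpowers (φ c), ∀ x ∈ {u : Lˣ | f (u : L) = 1},
      h * x ∈ {u : Lˣ | f (u : L) = 1} := by
    have hle : Subgroup.zpowers (φ c) ≤
        { carrier := {h : Lˣ | ∀ x : Lˣ, f ((h * x : Lˣ) : L) = f (x : L)}
          one_mem' := fun x => by simp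
          mul_mem' := fun {g h} hg hh x => by rw [mul_assoc, hg, hh]
          inv_mem' := fun {h} hh x => by rw [← hh, mul_inv_cancel_left] } := by
      rw [Subgroup.zpowers_le]
      exact fun x => hc x x.ne_zero
    exact fun h hh x hx => (hle hh x).trans hx
  have hdvd := card_subgroup_dvd_card_of_mul_mem _ _ hstable
  rw [hf.card_preimage_units hsurj one_ne_zero, Nat.card_zpowers,
    orderOf_injective φ hinj] at hdvd
  have hdvd' : orderOf c ∣ q - 1 := by
    rw [← hK, ← Fintype.card_units]
    exact orderOf_dvd_card
  have hq : 1 ≤ q := hK ▸ Fintype.card_pos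
  have hcop : Nat.Coprime (q - 1) (q ^ (n - 1)) := by
    apply Nat.Coprime.pow_right
    have h := (Nat.coprime_self_add_right (m := q - 1) (n := 1)).mpr (Nat.coprime_one_right _)
    rwa [Nat.sub_add_cancel hq] at h
  exact orderOf_eq_one_iff.mp (Nat.eq_one_of_dvd_coprimes hcop hdvd' hdvd)

/-- If `f : L∖{0} → K` is surjective onto `K` and two-tuple balanced, then for every
`b ∈ K∖{0}` the preimage `D_b = {x : f(x) = b}` is a
`((qⁿ−1)/(q−1), q−1, q^{n−1}, q^{n−2})` relative difference set in `L^×`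
relative to `K^×`. -/
theorem stmt_8 {K L : Type*} [Field K] [Field L] [Algebra K L] [Fintype K] [Fintype L]
    (p m n q : ℕ) (hp : p.Prime) (hodd : Odd p) (hm : 1 ≤ m) (hn : 2 ≤ n)
    (hq : q = p ^ m) (hK : Fintype.card K = q) (hL : Fintype.card L = q ^ n)
    (f : L → K) (hsurj : ∀ b : K, ∃ x : L, x ≠ 0 ∧ f x = b)
    (hf : IsTwoTupleBalanced q n f) :
    ∀ b : K, b ≠ 0 →
      IsRelDiffSet {u : Lˣ | f (u : L) = b}
        (Units.map (algebraMap K L).toMonoidHom).range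
        ((q ^ n - 1) / (q - 1)) (q - 1) (q ^ (n - 1)) (q ^ (n - 2)) := by
  intro b hb
  have hinj : Function.Injective (Units.map (algebraMap K L).toMonoidHom) :=
    Units.map_injective (algebraMap K L).injective
  refine ⟨?_, ?_, hf.card_preimage_units hsurj hb, ?_, ?_⟩
  · rw [Nat.card_units, Nat.card_eq_fintype_card, hL, Nat.div_mul_cancel]
    simpa using Nat.sub_dvd_pow_sub_pow q 1 n
  · rw [← Nat.card_congr (MonoidHom.ofInjective hinj).toEquiv, Nat.card_units,
      Nat.card_eq_fintype_card, hK]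
  · intro g hg
    rw [card_quotient_representations_eq_Ntt]
    refine (hf.1 g g.ne_zero fun c hc => hg ?_).2 b b fun h => hb h.1
    have hc0 : c ≠ 0 := by
      rintro rfl
      exact g.ne_zero (by rw [← hc, map_zero])
    exact ⟨Units.mk0 c hc0, Units.ext hc⟩
  · rintro _ ⟨c, rfl⟩ hne
    rw [card_quotient_representations_eq_Ntt]
    obtain ⟨μ, hμ, -, -, hzero⟩ := hf.2 c c.ne_zero
    refine hzero b b fun hbμ => hne ?_
    have hμ1 : μ = 1 := (mul_eq_right₀ hb).mp hbμ.symm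
    rw [hf.eq_one_of_invariant hK hsurj c fun x hx => by rw [hμ x hx, hμ1, one_mul], map_one]
end

section
/- Let p be an odd prime, q = p^m, and n ≥ 2. Let C ⊆ L^× be a ((q^n−1)/(q−1), q−1, q^{n−1}, q^{n−2}) relative difference set relative to K^×, let d be an integer with gcd(d, q−1) = 1, and let f : L∖{0} → K be a function satisfying: f(b·x) = b^d for every b ∈ K∖{0} and every x ∈ C, and f(x) = 0 for every x ∈ L∖{0} not lying in any coset b·C with b ∈ K∖{0} (such an f exists and is well defined since the cosets b·C, b ∈ K∖{0}, are pairwise disjoint). Then f is two-tuple balanced; in particular f is d-homogeneous and difference balanced. -/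
/-- A finite set is counted by the fibers of any function into a finite type. -/
theorem card_setOf_eq_sum_card_fiber {α β : Type*} [Finite α] [Fintype β] (P : α → Prop)
    (g : α → β) : Nat.card {x | P x} = ∑ b, Nat.card {x | P x ∧ g x = b} := by
  classical
  have := Fintype.ofFinite α
  simp only [Nat.card_eq_fintype_card, Set.coe_ofPred, Fintype.card_subtype]
  rw [Finset.card_eq_sum_card_fiberwise (f := g) (t := Finset.univ) (by simp)]
  simp [Finset.filter_filter]

/-- A sum that is constant away from `0`. -/
theorem sum_eq_add_of_forall_ne_zero {K : Type*} [Field K] [Fintype K] {q s : ℕ}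
    (hK : Fintype.card K = q) (F : K → ℕ) (hF : ∀ b, b ≠ 0 → F b = s) :
    ∑ b, F b = F 0 + (q - 1) * s := by
  classical
  rw [← Finset.add_sum_erase Finset.univ F (Finset.mem_univ 0),
    Finset.sum_congr rfl fun b hb => hF b (Finset.ne_of_mem_erase hb)]
  simp [hK]

section PowerMap

variable {K : Type*} [Field K] [Fintype K] {q d : ℕ}

theorem exists_pow_eq_of_coprime_s9 (hK : Fintype.card K = q) (hd : d.Coprime (q - 1)) {b : K}
    (hb : b ≠ 0) : ∃ β : K, β ≠ 0 ∧ β ^ d = b := by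
  classical
  have h : (Nat.card Kˣ).Coprime d := by
    rw [Nat.card_eq_fintype_card, Fintype.card_units, hK]; exact hd.symm
  obtain ⟨u, hu⟩ := (powCoprime h).surjective (Units.mk0 b hb)
  exact ⟨u, u.ne_zero, by simpa using congrArg Units.val hu⟩

theorem pow_injective_of_coprime (hK : Fintype.card K = q) (hd : d.Coprime (q - 1)) {b c : K}
    (hb : b ≠ 0) (hc : c ≠ 0) (h : b ^ d = c ^ d) : b = c := by
  classical
  have hco : (Nat.card Kˣ).Coprime d := by
    rw [Nat.card_eq_fintype_card, Fintype.card_units, hK]; exact hd.symm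
  have : Units.mk0 b hb = Units.mk0 c hc := (powCoprime hco).injective (by ext; simpa using h)
  simpa using congrArg Units.val this

end PowerMap

theorem card_setOf_mul_eq {K L : Type*} [Field L] {f : L → K} {a : L} (ha : a ≠ 0) (b : K) :
    Nat.card {x : L | x ≠ 0 ∧ f (a * x) = b} = Nat.card {x : L | x ≠ 0 ∧ f x = b} :=
  Nat.card_congr ((Equiv.mulLeft₀ a ha).subtypeEquiv fun x => by simp [ha])

theorem IsBalanced.const_mul {K L : Type*} [Field K] [Field L] {q n : ℕ} {f : L → K}
    (hf : IsBalanced q n f) {c : K} (hc : c ≠ 0) {g : L → K} (hg : ∀ x, x ≠ 0 → g x = c * f x) :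
    IsBalanced q n g := by
  have key (b : K) : {x : L | x ≠ 0 ∧ g x = b} = {x : L | x ≠ 0 ∧ f x = c⁻¹ * b} := by
    ext x
    refine and_congr_right fun hx => ?_
    rw [hg x hx, eq_inv_mul_iff_mul_eq₀ hc]
  refine ⟨?_, fun b hb => ?_⟩
  · rw [key, mul_zero]; exact hf.1
  · rw [key]; exact hf.2 _ (by simp [hb, hc])

section Balanced

variable {K L : Type*} [Field K] [Field L] [Fintype K] [Fintype L] {q n : ℕ} {f : L → K}

theorem isBalanced_of_card_fiber (hq : 1 ≤ q) (hn : 1 ≤ n) (hK : Fintype.card K = q)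
    (hL : Fintype.card L = q ^ n)
    (h : ∀ b : K, b ≠ 0 → Nat.card {x : L | x ≠ 0 ∧ f x = b} = q ^ (n - 1)) :
    IsBalanced q n f := by
  classical
  refine ⟨?_, h⟩
  have h1 := card_setOf_eq_sum_card_fiber (fun x : L => x ≠ 0) f
  have h2 : Nat.card {x : L | x ≠ 0} = q ^ n - 1 := by
    rw [Nat.card_eq_fintype_card, ← hL]
    exact Set.card_ne_eq 0
  rw [sum_eq_add_of_forall_ne_zero hK _ h, h2] at h1
  obtain ⟨k, rfl⟩ := Nat.exists_eq_add_of_le' hn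
  obtain ⟨r, rfl⟩ := Nat.exists_eq_add_of_le' hq
  have hexp : (r + 1) ^ (k + 1) = (r + 1) ^ k + r * (r + 1) ^ k := by ring
  simp only [Nat.add_sub_cancel, hexp] at h1 ⊢
  have := Nat.one_le_pow k (r + 1) (by omega)
  omega

theorem ntt_eq_of_forall_ne_zero (hq : 1 ≤ q) (hn : 2 ≤ n) (hK : Fintype.card K = q)
    (hf : IsBalanced q n f) {a : L} (ha : a ≠ 0)
    (h : ∀ b₁ b₂ : K, b₁ ≠ 0 → b₂ ≠ 0 → Ntt f a b₁ b₂ = q ^ (n - 2)) :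
    Ntt f a 0 0 = q ^ (n - 2) - 1 ∧
      ∀ b₁ b₂ : K, ¬(b₁ = 0 ∧ b₂ = 0) → Ntt f a b₁ b₂ = q ^ (n - 2) := by
  obtain ⟨k, rfl⟩ := Nat.exists_eq_add_of_le' hn
  obtain ⟨r, rfl⟩ := Nat.exists_eq_add_of_le' hq
  have hrow (b₁ : K) : Nat.card {x : L | x ≠ 0 ∧ f x = b₁} = ∑ b₂, Ntt f a b₁ b₂ := by
    simpa only [Ntt, and_assoc] using
      card_setOf_eq_sum_card_fiber (fun x : L => x ≠ 0 ∧ f x = b₁) (fun x => f (a * x))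
  have hcol (b₂ : K) : Nat.card {x : L | x ≠ 0 ∧ f x = b₂} = ∑ b₁, Ntt f a b₁ b₂ := by
    rw [← card_setOf_mul_eq ha, card_setOf_eq_sum_card_fiber _ f]
    simp only [Ntt, and_assoc, and_comm]
  have hexp : (r + 1) ^ (k + 2 - 1) = (r + 1) ^ k + r * (r + 1) ^ k := by
    rw [show k + 2 - 1 = k + 1 by omega]; ring
  simp only [Nat.add_sub_cancel] at h ⊢
  have hr0 (b₁ : K) (hb : b₁ ≠ 0) : Ntt f a b₁ 0 = (r + 1) ^ k := by
    have := hrow b₁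
    rw [hf.2 b₁ hb, sum_eq_add_of_forall_ne_zero hK _ fun b₂ => h b₁ b₂ hb, hexp] at this
    simp only [Nat.add_sub_cancel] at this
    omega
  have h0r (b₂ : K) (hb : b₂ ≠ 0) : Ntt f a 0 b₂ = (r + 1) ^ k := by
    have := hcol b₂
    rw [hf.2 b₂ hb, sum_eq_add_of_forall_ne_zero hK _ fun b₁ hb₁ => h b₁ b₂ hb₁ hb, hexp] at this
    simp only [Nat.add_sub_cancel] at this
    omega
  constructor
  · have := hrow 0
    rw [hf.1, sum_eq_add_of_forall_ne_zero hK _ h0r, hexp] at this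
    simp only [Nat.add_sub_cancel] at this
    have := Nat.one_le_pow k (r + 1) (by omega)
    omega
  · intro b₁ b₂ hb
    by_cases h1 : b₁ = 0
    · subst h1
      exact h0r b₂ fun h2 => hb ⟨rfl, h2⟩
    · by_cases h2 : b₂ = 0
      · subst h2
        exact hr0 b₁ h1
      · exact h b₁ b₂ h1 h2

theorem isBalanced_sub_of_ntt (hq : 1 ≤ q) (hn : 2 ≤ n) (hK : Fintype.card K = q) {a : L}
    (h0 : Ntt f a 0 0 = q ^ (n - 2) - 1)
    (h : ∀ b₁ b₂ : K, ¬(b₁ = 0 ∧ b₂ = 0) → Ntt f a b₁ b₂ = q ^ (n - 2)) :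
    IsBalanced q n (fun x => f (a * x) - f x) := by
  have key (b : K) : Nat.card {x : L | x ≠ 0 ∧ f (a * x) - f x = b} =
      ∑ b₁, Ntt f a b₁ (b + b₁) := by
    rw [card_setOf_eq_sum_card_fiber _ f]
    refine Finset.sum_congr rfl fun b₁ _ => ?_
    rw [Ntt]
    congr 2
    ext x
    simp only [Set.mem_ofPred_eq, and_assoc, sub_eq_iff_eq_add]
    refine and_congr_right fun _ => ⟨fun ⟨h1, h2⟩ => ⟨h2, h2 ▸ h1⟩, fun ⟨h1, h2⟩ => ⟨h1 ▸ h2, h1⟩⟩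
  obtain ⟨k, rfl⟩ := Nat.exists_eq_add_of_le' hn
  obtain ⟨r, rfl⟩ := Nat.exists_eq_add_of_le' hq
  have hexp : (r + 1) ^ (k + 2 - 1) = (r + 1) ^ k + r * (r + 1) ^ k := by
    rw [show k + 2 - 1 = k + 1 by omega]; ring
  simp only [Nat.add_sub_cancel] at h h0
  refine ⟨?_, fun b hb => ?_⟩
  · rw [key, sum_eq_add_of_forall_ne_zero hK _ fun b₁ hb₁ => h b₁ (0 + b₁) (by simp [hb₁]),
      add_zero, h0, hexp]
    simp only [Nat.add_sub_cancel]
    have := Nat.one_le_pow k (r + 1) (by omega)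
    omega
  · rw [key, sum_eq_add_of_forall_ne_zero hK _ fun b₁ hb₁ => h b₁ (b + b₁) (by simp [hb₁]),
      h 0 _ (by simp [hb]), hexp]
    simp

end Balanced

section Homogeneous

variable {K L : Type*} [Field K] [Field L] [Algebra K L] {q n d : ℕ} {f : L → K}

theorem IsBalanced.ntt_algebraMap (hf : IsBalanced q n f) {c μ : K} (hμ : μ ≠ 0)
    (h : ∀ x : L, x ≠ 0 → f (algebraMap K L c * x) = μ * f x) :
    Ntt f (algebraMap K L c) 0 0 = q ^ (n - 1) - 1 ∧
      (∀ b₁ : K, b₁ ≠ 0 → Ntt f (algebraMap K L c) b₁ (μ * b₁) = q ^ (n - 1)) ∧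
      (∀ b₁ b₂ : K, b₂ ≠ μ * b₁ → Ntt f (algebraMap K L c) b₁ b₂ = 0) := by
  have key (b₁ : K) : Ntt f (algebraMap K L c) b₁ (μ * b₁) =
      Nat.card {x : L | x ≠ 0 ∧ f x = b₁} := by
    rw [Ntt]
    congr 2
    ext x
    refine and_congr_right fun hx => ?_
    simp [h x hx, hμ]
  refine ⟨?_, fun b₁ hb₁ => (key b₁).trans (hf.2 b₁ hb₁), fun b₁ b₂ hb => ?_⟩
  · simpa using (key 0).trans hf.1
  · rw [Ntt, Nat.card_eq_zero]
    exact Or.inl ⟨fun ⟨x, hx, h1, h2⟩ => hb (by rw [← h2, h x hx, h1])⟩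

theorem IsTwoTupleBalanced.isDiffBalanced [Fintype K] [Fintype L] (hq : 1 ≤ q) (hn : 2 ≤ n)
    (hK : Fintype.card K = q) (hf : IsBalanced q n f) (hft : IsTwoTupleBalanced q n f)
    (hfd : IsDHomogeneous q d f) : IsDiffBalanced q n f := by
  intro a ha ha1
  by_cases hmem : ∃ c : K, algebraMap K L c = a
  · obtain ⟨c, rfl⟩ := hmem
    have hc : c ≠ 0 := by rintro rfl; simp at ha
    refine hf.const_mul (c := c ^ d - 1) (fun h => ha1 ?_) fun x hx => ?_
    · rw [pow_injective_of_coprime hK hfd.1 hc one_ne_zero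
        (by rw [one_pow]; exact sub_eq_zero.1 h), map_one]
    · rw [hfd.2 c hc x hx, sub_mul, one_mul]
  · obtain ⟨h0, h⟩ := hft.1 a ha (not_exists.1 hmem)
    exact isBalanced_sub_of_ntt hq hn hK h0 h

end Homogeneous

section Coset

variable {K L : Type*} [Field K] [Field L] [Algebra K L] {q d : ℕ} {f : L → K} {C : Set Lˣ}

theorem map_algebraMap_mul_of_coset
    (hf1 : ∀ b : K, b ≠ 0 → ∀ u : Lˣ, u ∈ C → f (algebraMap K L b * (u : L)) = b ^ d)
    (hf0 : ∀ x : L, x ≠ 0 →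
      (∀ b : K, b ≠ 0 → ∀ u : Lˣ, u ∈ C → x ≠ algebraMap K L b * (u : L)) → f x = 0)
    {c : K} (hc : c ≠ 0) {x : L} (hx : x ≠ 0) :
    f (algebraMap K L c * x) = c ^ d * f x := by
  have hc' : algebraMap K L c ≠ 0 := by simpa using hc
  by_cases h : ∃ b : K, b ≠ 0 ∧ ∃ u : Lˣ, u ∈ C ∧ x = algebraMap K L b * (u : L)
  · obtain ⟨b, hb, u, hu, rfl⟩ := h
    rw [← mul_assoc, ← map_mul, hf1 _ (mul_ne_zero hc hb) u hu, hf1 b hb u hu, mul_pow]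
  · push Not at h
    rw [hf0 x hx h, mul_zero]
    refine hf0 _ (mul_ne_zero hc' hx) fun b hb u hu he => ?_
    refine h (c⁻¹ * b) (mul_ne_zero (inv_ne_zero hc) hb) u hu ?_
    rw [map_mul, map_inv₀, mul_assoc, ← he, inv_mul_cancel_left₀ hc']

theorem map_eq_pow_iff_of_coset [Fintype K] (hK : Fintype.card K = q) (hd : d.Coprime (q - 1))
    (hf1 : ∀ b : K, b ≠ 0 → ∀ u : Lˣ, u ∈ C → f (algebraMap K L b * (u : L)) = b ^ d)
    (hf0 : ∀ x : L, x ≠ 0 →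
      (∀ b : K, b ≠ 0 → ∀ u : Lˣ, u ∈ C → x ≠ algebraMap K L b * (u : L)) → f x = 0)
    {β : K} (hβ : β ≠ 0) {x : L} (hx : x ≠ 0) :
    f x = β ^ d ↔ ∃ u ∈ C, x = algebraMap K L β * (u : L) := by
  refine ⟨fun h => ?_, fun ⟨u, hu, he⟩ => he ▸ hf1 β hβ u hu⟩
  by_contra! hne
  refine pow_ne_zero d hβ (h.symm.trans (hf0 x hx fun b hb u hu he => ?_))
  rw [he, hf1 b hb u hu] at h
  obtain rfl := pow_injective_of_coprime hK hd hb hβ h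
  exact hne u hu he

theorem card_fiber_of_coset [Fintype K] (hK : Fintype.card K = q) (hd : d.Coprime (q - 1))
    (hf1 : ∀ b : K, b ≠ 0 → ∀ u : Lˣ, u ∈ C → f (algebraMap K L b * (u : L)) = b ^ d)
    (hf0 : ∀ x : L, x ≠ 0 →
      (∀ b : K, b ≠ 0 → ∀ u : Lˣ, u ∈ C → x ≠ algebraMap K L b * (u : L)) → f x = 0)
    {b : K} (hb : b ≠ 0) : Nat.card {x : L | x ≠ 0 ∧ f x = b} = Nat.card C := by
  obtain ⟨β, hβ, rfl⟩ := exists_pow_eq_of_coprime_s9 hK hd hb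
  have hβ' : algebraMap K L β ≠ 0 := by simpa using hβ
  symm
  refine Nat.card_eq_of_bijective
    (fun u : C => (⟨algebraMap K L β * (u.1 : L),
      mul_ne_zero hβ' u.1.ne_zero, hf1 β hβ u.1 u.2⟩ : {x : L | x ≠ 0 ∧ f x = β ^ d}))
    ⟨fun u v h => ?_, fun ⟨x, hx, h⟩ => ?_⟩
  · exact Subtype.ext (Units.ext (mul_left_cancel₀ hβ' (congrArg Subtype.val h)))
  · obtain ⟨u, hu, he⟩ := (map_eq_pow_iff_of_coset hK hd hf1 hf0 hβ hx).1 h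
    exact ⟨⟨u, hu⟩, Subtype.ext he.symm⟩

/-- Pairs of nonzero values of `f` at `x` and `a * x` correspond to representations of a
`Kˣ`-multiple of `a` as a quotient of elements of `C`. -/
theorem ntt_pow_pow_of_coset [Fintype K] (hK : Fintype.card K = q) (hd : d.Coprime (q - 1))
    (hf1 : ∀ b : K, b ≠ 0 → ∀ u : Lˣ, u ∈ C → f (algebraMap K L b * (u : L)) = b ^ d)
    (hf0 : ∀ x : L, x ≠ 0 →
      (∀ b : K, b ≠ 0 → ∀ u : Lˣ, u ∈ C → x ≠ algebraMap K L b * (u : L)) → f x = 0)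
    {β γ : K} (hβ : β ≠ 0) (hγ : γ ≠ 0) {a : L} (ha : a ≠ 0) {g : Lˣ}
    (hg : algebraMap K L γ * (g : L) = a * algebraMap K L β) :
    Ntt f a (β ^ d) (γ ^ d) =
      Nat.card {pq : Lˣ × Lˣ // pq.1 ∈ C ∧ pq.2 ∈ C ∧ pq.1 * pq.2⁻¹ = g} := by
  have hβ' : algebraMap K L β ≠ 0 := by simpa using hβ
  have hγ' : algebraMap K L γ ≠ 0 := by simpa using hγ
  have hmul (u : Lˣ) : a * (algebraMap K L β * (u : L)) = algebraMap K L γ * ((g * u : Lˣ) : L) := by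
    rw [Units.val_mul, ← mul_assoc, ← hg, mul_assoc]
  symm
  refine Nat.card_eq_of_bijective
    (fun w : {pq : Lˣ × Lˣ // pq.1 ∈ C ∧ pq.2 ∈ C ∧ pq.1 * pq.2⁻¹ = g} =>
      (⟨algebraMap K L β * (w.1.2 : L), mul_ne_zero hβ' w.1.2.ne_zero, hf1 β hβ _ w.2.2.1, ?_⟩ :
        {x : L | x ≠ 0 ∧ f x = β ^ d ∧ f (a * x) = γ ^ d})) ⟨?_, ?_⟩
  · rw [hmul, ← mul_inv_eq_iff_eq_mul.1 w.2.2.2]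
    exact hf1 γ hγ _ w.2.1
  · rintro ⟨⟨v, u⟩, hv, hu, h⟩ ⟨⟨v', u'⟩, hv', hu', h'⟩ he
    obtain rfl : u = u' := Units.ext (mul_left_cancel₀ hβ' (congrArg Subtype.val he))
    obtain rfl : v = v' := mul_right_cancel (h.trans h'.symm)
    rfl
  · rintro ⟨x, hx, h1, h2⟩
    obtain ⟨u, hu, rfl⟩ := (map_eq_pow_iff_of_coset hK hd hf1 hf0 hβ hx).1 h1
    obtain ⟨v, hv, he⟩ := (map_eq_pow_iff_of_coset hK hd hf1 hf0 hγ (mul_ne_zero ha hx)).1 h2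
    refine ⟨⟨(v, u), hv, hu, ?_⟩, rfl⟩
    rw [mul_inv_eq_iff_eq_mul]
    exact Units.ext (mul_left_cancel₀ hγ' (he.symm.trans (hmul u)))

end Coset

/-- If `C ⊆ L^×` is a `((qⁿ−1)/(q−1), q−1, q^{n−1}, q^{n−2})` relative difference set
relative to `K^×`, `gcd(d, q−1) = 1`, and `f : L∖{0} → K` satisfies `f(b·x) = b^d` for
`b ∈ K∖{0}`, `x ∈ C`, and `f(x) = 0` for all other `x`, then `f` is two-tuple balanced;
in particular `f` is `d`-homogeneous and difference balanced. -/
theorem stmt_9 {K L : Type*} [Field K] [Field L] [Algebra K L] [Fintype K] [Fintype L]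
    (p m n q : ℕ) (hp : p.Prime) (hodd : Odd p) (hm : 1 ≤ m) (hn : 2 ≤ n)
    (hq : q = p ^ m) (hK : Fintype.card K = q) (hL : Fintype.card L = q ^ n)
    (C : Set Lˣ)
    (hC : IsRelDiffSet C (Units.map (algebraMap K L).toMonoidHom).range
      ((q ^ n - 1) / (q - 1)) (q - 1) (q ^ (n - 1)) (q ^ (n - 2)))
    (d : ℕ) (hd : Nat.Coprime d (q - 1))
    (f : L → K)
    (hf1 : ∀ b : K, b ≠ 0 → ∀ u : Lˣ, u ∈ C → f (algebraMap K L b * (u : L)) = b ^ d)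
    (hf0 : ∀ x : L, x ≠ 0 →
      (∀ b : K, b ≠ 0 → ∀ u : Lˣ, u ∈ C → x ≠ algebraMap K L b * (u : L)) → f x = 0) :
    IsTwoTupleBalanced q n f ∧ IsDHomogeneous q d f ∧ IsDiffBalanced q n f := by
  have hq1 : 1 ≤ q := hK ▸ Fintype.card_pos
  obtain ⟨-, -, hcard, hrep, -⟩ := hC
  have hbal : IsBalanced q n f := isBalanced_of_card_fiber hq1 (by omega) hK hL fun b hb =>
    (card_fiber_of_coset hK hd hf1 hf0 hb).trans hcard
  have hhom : IsDHomogeneous q d f :=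
    ⟨hd, fun c hc x hx => map_algebraMap_mul_of_coset hf1 hf0 hc hx⟩
  have htwo : IsTwoTupleBalanced q n f := by
    refine ⟨fun a ha hmem => ntt_eq_of_forall_ne_zero hq1 hn hK hbal ha fun b₁ b₂ hb₁ hb₂ => ?_,
      fun c hc => ⟨c ^ d, hhom.2 c hc, hbal.ntt_algebraMap (pow_ne_zero d hc) (hhom.2 c hc)⟩⟩
    obtain ⟨β, hβ, rfl⟩ := exists_pow_eq_of_coprime_s9 hK hd hb₁
    obtain ⟨γ, hγ, rfl⟩ := exists_pow_eq_of_coprime_s9 hK hd hb₂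
    have hβ' : algebraMap K L β ≠ 0 := by simpa using hβ
    have hγ' : algebraMap K L γ ≠ 0 := by simpa using hγ
    have hne : (algebraMap K L γ)⁻¹ * (a * algebraMap K L β) ≠ 0 :=
      mul_ne_zero (inv_ne_zero hγ') (mul_ne_zero ha hβ')
    rw [ntt_pow_pow_of_coset hK hd hf1 hf0 hβ hγ ha (g := Units.mk0 _ hne)
      (mul_inv_cancel_left₀ hγ' _)]
    refine hrep _ ?_
    rintro ⟨c, hc⟩
    refine hmem (γ * c * β⁻¹) ?_
    have hc' : algebraMap K L c = (algebraMap K L γ)⁻¹ * (a * algebraMap K L β) :=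
      congrArg Units.val hc
    rw [map_mul, map_mul, map_inv₀, hc', mul_inv_cancel_left₀ hγ', mul_inv_cancel_right₀ hβ']
  exact ⟨htwo, hhom, htwo.isDiffBalanced hq1 hn hK hbal hhom⟩
end

section
/- Let p be an odd prime, q = p^m, and let ℓ, n be integers with 2 ≤ ℓ, 2ℓ ≤ n, and ℓ dividing n. Let K ⊆ M ⊆ L be a tower of finite fields with |K| = q, |M| = q^ℓ, |L| = q^n (with fixed compatible embeddings). Suppose D₁ ⊆ L^× is a ((q^n−1)/(q^ℓ−1), q^ℓ−1, q^{n−ℓ}, q^{n−2ℓ}) relative difference set relative to M^× (the image of M∖{0} in L^×), and D₂ ⊆ M^× is a ((q^ℓ−1)/(q−1), q−1, q^{ℓ−1}, q^{ℓ−2}) relative difference set relative to K^× (the image of K∖{0} in M^×). Then the product set D := {d₁·d₂ : d₁ ∈ D₁, d₂ ∈ D₂} (with d₂ viewed in L^× via the embedding M → L) is a ((q^n−1)/(q−1), q−1, q^{n−1}, q^{n−2}) relative difference set in L^× relative to K^× (the image of K∖{0} in L^×). -/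
namespace IsRelDiffSet

variable {G H : Type*}

/-- A quotient of two elements of a relative difference set lies in the forbidden subgroup only
if the two elements agree. -/
theorem eq_of_mul_inv_mem [Group G] [Finite G] {D : Set G} {N : Subgroup G} {m n k lam : ℕ}
    (hD : IsRelDiffSet D N m n k lam) {x y : G} (hx : x ∈ D) (hy : y ∈ D) (h : x * y⁻¹ ∈ N) :
    x = y := by
  by_contra hne
  have h0 := hD.2.2.2.2 _ h (fun h1 => hne (mul_inv_eq_one.mp h1))
  rcases Nat.card_eq_zero.mp h0 with h1 | h1
  · exact h1.elim ⟨(x, y), hx, hy, rfl⟩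
  · exact h1.not_finite inferInstance

variable [CommGroup G] [Group H] [Finite G]
  {φ : H →* G} {D₁ : Set G} {D₂ : Set H} {m₁ n₁ k₁ lam₁ : ℕ}

theorem eq_and_eq_of_mul_map_eq (hφ : Function.Injective φ)
    (hD₁ : IsRelDiffSet D₁ φ.range m₁ n₁ k₁ lam₁) {x y : G} {a b : H}
    (hx : x ∈ D₁) (hy : y ∈ D₁) (h : x * φ a = y * φ b) : x = y ∧ a = b := by
  have hxy : x = y := hD₁.eq_of_mul_inv_mem hx hy
    ⟨b * a⁻¹, by rw [map_mul, map_inv, ← div_eq_mul_inv, ← div_eq_mul_inv, div_eq_div_iff_mul_eq_mul,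
      mul_comm, ← h, mul_comm]⟩
  subst hxy
  exact ⟨rfl, hφ (mul_left_cancel h)⟩

theorem card_mul_map (hφ : Function.Injective φ)
    (hD₁ : IsRelDiffSet D₁ φ.range m₁ n₁ k₁ lam₁) :
    Nat.card {w : G | ∃ d₁ ∈ D₁, ∃ d₂ ∈ D₂, w = d₁ * φ d₂} = Nat.card D₁ * Nat.card D₂ := by
  rw [← Nat.card_prod]
  symm
  refine Nat.card_congr (Equiv.ofBijective
    (fun x => ⟨x.1 * φ x.2, x.1, x.1.2, x.2, x.2.2, rfl⟩) ⟨?_, ?_⟩)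
  · rintro ⟨⟨x, hx⟩, ⟨a, ha⟩⟩ ⟨⟨y, hy⟩, ⟨b, hb⟩⟩ h
    obtain ⟨rfl, rfl⟩ := hD₁.eq_and_eq_of_mul_map_eq hφ hx hy (congrArg Subtype.val h)
    rfl
  · rintro ⟨_, x, hx, a, ha, rfl⟩
    exact ⟨(⟨x, hx⟩, ⟨a, ha⟩), rfl⟩

/-- An element outside the range of `φ` has `λ₁ |D₂|²` representations as a quotient in
`D₁ · φ(D₂)`. -/
theorem card_reps_mul_map_of_notMem [Finite H] (hφ : Function.Injective φ)
    (hD₁ : IsRelDiffSet D₁ φ.range m₁ n₁ k₁ lam₁) {g : G} (hg : g ∉ φ.range) :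
    Nat.card {pq : G × G // pq.1 ∈ {w : G | ∃ d₁ ∈ D₁, ∃ d₂ ∈ D₂, w = d₁ * φ d₂} ∧
      pq.2 ∈ {w : G | ∃ d₁ ∈ D₁, ∃ d₂ ∈ D₂, w = d₁ * φ d₂} ∧ pq.1 * pq.2⁻¹ = g} =
      Nat.card D₂ ^ 2 * lam₁ := by
  have key : ∀ ab : D₂ × D₂, Nat.card {pq : G × G // pq.1 ∈ D₁ ∧ pq.2 ∈ D₁ ∧
      pq.1 * pq.2⁻¹ = g * (φ (ab.1 * (ab.2 : H)⁻¹))⁻¹} = lam₁ := fun ab =>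
    hD₁.2.2.2.1 _ fun h => hg <| by
      simpa only [inv_mul_cancel_right] using φ.range.mul_mem h ⟨ab.1 * (ab.2 : H)⁻¹, rfl⟩
  have := Fintype.ofFinite (D₂ × D₂)
  have hsum : Nat.card (Σ ab : D₂ × D₂, {pq : G × G // pq.1 ∈ D₁ ∧ pq.2 ∈ D₁ ∧
      pq.1 * pq.2⁻¹ = g * (φ (ab.1 * (ab.2 : H)⁻¹))⁻¹}) = Nat.card D₂ ^ 2 * lam₁ := by
    rw [Nat.card_sigma, Finset.sum_congr rfl fun ab _ => key ab, Finset.sum_const,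
      Finset.card_univ, ← Nat.card_eq_fintype_card, Nat.card_prod, smul_eq_mul, sq]
  rw [← hsum]
  symm
  refine Nat.card_congr (Equiv.ofBijective
    (fun x => ⟨(x.2.1.1 * φ x.1.1, x.2.1.2 * φ x.1.2),
      ⟨_, x.2.2.1, _, x.1.1.2, rfl⟩, ⟨_, x.2.2.2.1, _, x.1.2.2, rfl⟩, ?_⟩) ⟨?_, ?_⟩)
  · obtain ⟨⟨a, b⟩, ⟨⟨x, y⟩, hx, hy, h⟩⟩ := x
    rw [eq_mul_inv_iff_mul_eq, map_mul, map_inv] at h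
    rw [mul_inv]
    exact (mul_mul_mul_comm _ _ _ _).trans h
  · rintro ⟨⟨⟨a, ha⟩, ⟨b, hb⟩⟩, ⟨⟨x, y⟩, hx, hy, hxy⟩⟩
      ⟨⟨⟨a', ha'⟩, ⟨b', hb'⟩⟩, ⟨⟨x', y'⟩, hx', hy', hxy'⟩⟩ h
    have h' := congrArg Subtype.val h
    obtain ⟨rfl, rfl⟩ := hD₁.eq_and_eq_of_mul_map_eq hφ hx hx' (congrArg Prod.fst h')
    obtain ⟨rfl, rfl⟩ := hD₁.eq_and_eq_of_mul_map_eq hφ hy hy' (congrArg Prod.snd h')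
    rfl
  · rintro ⟨⟨u, v⟩, ⟨x, hx, a, ha, hu⟩, ⟨y, hy, b, hb, hv⟩, h⟩
    dsimp only at hu hv
    subst hu hv
    refine ⟨⟨(⟨a, ha⟩, ⟨b, hb⟩), ⟨(x, y), hx, hy, ?_⟩⟩, rfl⟩
    rw [eq_mul_inv_iff_mul_eq, map_mul, map_inv, ← h, mul_inv]
    exact mul_mul_mul_comm _ _ _ _

/-- Each representation of `h` as a quotient in `D₂` gives `|D₁|` representations of `φ h` as a
quotient in `D₁ · φ(D₂)`, and there are no others. -/
theorem card_reps_mul_map_of_map (hφ : Function.Injective φ)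
    (hD₁ : IsRelDiffSet D₁ φ.range m₁ n₁ k₁ lam₁) (h : H) :
    Nat.card {pq : G × G // pq.1 ∈ {w : G | ∃ d₁ ∈ D₁, ∃ d₂ ∈ D₂, w = d₁ * φ d₂} ∧
      pq.2 ∈ {w : G | ∃ d₁ ∈ D₁, ∃ d₂ ∈ D₂, w = d₁ * φ d₂} ∧ pq.1 * pq.2⁻¹ = φ h} =
      Nat.card D₁ * Nat.card {pq : H × H // pq.1 ∈ D₂ ∧ pq.2 ∈ D₂ ∧ pq.1 * pq.2⁻¹ = h} := by
  rw [← Nat.card_prod]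
  symm
  refine Nat.card_congr (Equiv.ofBijective
    (fun x => ⟨(x.1 * φ x.2.1.1, x.1 * φ x.2.1.2),
      ⟨_, x.1.2, _, x.2.2.1, rfl⟩, ⟨_, x.1.2, _, x.2.2.2.1, rfl⟩, ?_⟩) ⟨?_, ?_⟩)
  · have h := congrArg φ x.2.2.2.2
    rw [map_mul, map_inv] at h
    rw [← h, ← div_eq_mul_inv, mul_div_mul_left_eq_div, div_eq_mul_inv]
  · rintro ⟨⟨x, hx⟩, ⟨⟨a, b⟩, ha, hb, hab⟩⟩ ⟨⟨x', hx'⟩, ⟨⟨a', b'⟩, ha', hb', hab'⟩⟩ h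
    have h' := congrArg Subtype.val h
    obtain ⟨rfl, rfl⟩ := hD₁.eq_and_eq_of_mul_map_eq hφ hx hx' (congrArg Prod.fst h')
    obtain ⟨-, rfl⟩ := hD₁.eq_and_eq_of_mul_map_eq hφ hx hx' (congrArg Prod.snd h')
    rfl
  · rintro ⟨⟨u, v⟩, ⟨x, hx, a, ha, hu⟩, ⟨y, hy, b, hb, hv⟩, hxy⟩
    dsimp only at hu hv hxy
    subst hu hv
    have heq : x * φ a = y * φ (h * b) := by
      rw [mul_inv_eq_iff_eq_mul.mp hxy, map_mul, mul_left_comm]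
    obtain ⟨rfl, rfl⟩ := hD₁.eq_and_eq_of_mul_map_eq hφ hx hy heq
    exact ⟨(⟨x, hx⟩, ⟨(h * b, b), ha, hb, mul_inv_cancel_right h b⟩), rfl⟩

/-- Products of relative difference sets along an injective homomorphism `φ : H →* G`. -/
theorem mul_map [Finite H] {N : Subgroup H} {m₂ n₂ k₂ lam₂ : ℕ} (hφ : Function.Injective φ)
    (hD₁ : IsRelDiffSet D₁ φ.range m₁ n₁ k₁ lam₁) (hD₂ : IsRelDiffSet D₂ N m₂ n₂ k₂ lam₂)
    (hlam : k₂ ^ 2 * lam₁ = k₁ * lam₂) :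
    IsRelDiffSet {w : G | ∃ d₁ ∈ D₁, ∃ d₂ ∈ D₂, w = d₁ * φ d₂} (N.map φ)
      (m₁ * m₂) n₂ (k₁ * k₂) (k₁ * lam₂) := by
  have hn : n₁ = m₂ * n₂ := by
    rw [← hD₁.2.1, ← hD₂.1]
    exact (Nat.card_congr (φ.ofInjective hφ).toEquiv).symm
  refine ⟨by rw [hD₁.1, hn, mul_assoc], ?_, ?_, ?_, ?_⟩
  · rw [← hD₂.2.1]
    exact (Nat.card_congr (N.equivMapOfInjective φ hφ).toEquiv).symm
  · rw [card_mul_map hφ hD₁, hD₁.2.2.1, hD₂.2.2.1]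
  · intro g hg
    by_cases hgφ : g ∈ φ.range
    · obtain ⟨h, rfl⟩ := hgφ
      rw [card_reps_mul_map_of_map hφ hD₁, hD₁.2.2.1,
        hD₂.2.2.2.1 h fun hh => hg (Subgroup.mem_map_of_mem φ hh)]
    · rw [card_reps_mul_map_of_notMem hφ hD₁ hgφ, hD₂.2.2.1, hlam]
  · rintro _ ⟨h, hh, rfl⟩ hne
    rw [card_reps_mul_map_of_map hφ hD₁, hD₂.2.2.2.2 h hh fun h1 => hne (by rw [h1, map_one]),
      mul_zero]

end IsRelDiffSet

/-- Product construction (Gordon–Mills–Welch / No): if `D₁ ⊆ L^×` is a relative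
difference set relative to `M^×` and `D₂ ⊆ M^×` is a relative difference set relative
to `K^×`, then `D₁·D₂ ⊆ L^×` is a `((qⁿ−1)/(q−1), q−1, q^{n−1}, q^{n−2})` relative
difference set relative to `K^×`. -/
theorem stmt_10 {K M L : Type*} [Field K] [Field M] [Field L]
    [Algebra K M] [Algebra M L] [Algebra K L] [IsScalarTower K M L]
    [Fintype K] [Fintype M] [Fintype L]
    (p mm n ℓ q : ℕ) (hp : p.Prime) (hodd : Odd p) (hmm : 1 ≤ mm)
    (hℓ : 2 ≤ ℓ) (h2ℓ : 2 * ℓ ≤ n) (hdvd : ℓ ∣ n)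
    (hq : q = p ^ mm) (hK : Fintype.card K = q) (hM : Fintype.card M = q ^ ℓ)
    (hL : Fintype.card L = q ^ n)
    (D₁ : Set Lˣ) (D₂ : Set Mˣ)
    (hD₁ : IsRelDiffSet D₁ (Units.map (algebraMap M L).toMonoidHom).range
      ((q ^ n - 1) / (q ^ ℓ - 1)) (q ^ ℓ - 1) (q ^ (n - ℓ)) (q ^ (n - 2 * ℓ)))
    (hD₂ : IsRelDiffSet D₂ (Units.map (algebraMap K M).toMonoidHom).range
      ((q ^ ℓ - 1) / (q - 1)) (q - 1) (q ^ (ℓ - 1)) (q ^ (ℓ - 2))) :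
    IsRelDiffSet
      {w : Lˣ | ∃ d₁ ∈ D₁, ∃ d₂ ∈ D₂, w = d₁ * Units.map (algebraMap M L).toMonoidHom d₂}
      (Units.map (algebraMap K L).toMonoidHom).range
      ((q ^ n - 1) / (q - 1)) (q - 1) (q ^ (n - 1)) (q ^ (n - 2)) := by
  have hφ : Function.Injective (Units.map (algebraMap M L).toMonoidHom) :=
    Units.map_injective (algebraMap M L).injective
  have hq1 : 1 < q := hK ▸ Fintype.one_lt_card
  have hlam : (q ^ (ℓ - 1)) ^ 2 * q ^ (n - 2 * ℓ) = q ^ (n - ℓ) * q ^ (ℓ - 2) := by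
    rw [← pow_mul, ← pow_add, ← pow_add]
    congr 1
    lia
  have hD := IsRelDiffSet.mul_map hφ hD₁ hD₂ hlam
  have hrange : (Units.map (algebraMap K M).toMonoidHom).range.map
      (Units.map (algebraMap M L).toMonoidHom) = (Units.map (algebraMap K L).toMonoidHom).range := by
    rw [MonoidHom.map_range, ← Units.map_comp]
    congr 2
    ext x
    exact (IsScalarTower.algebraMap_apply K M L x).symm
  have hcard : Nat.card Lˣ = q ^ n - 1 := by
    rw [Nat.card_units, Nat.card_eq_fintype_card, hL]
  have hm := Nat.div_eq_of_eq_mul_left (by lia) (hcard.symm.trans hD.1)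
  have hk : q ^ (n - ℓ) * q ^ (ℓ - 1) = q ^ (n - 1) := by
    rw [← pow_add]
    congr 1
    lia
  have hl : q ^ (n - ℓ) * q ^ (ℓ - 2) = q ^ (n - 2) := by
    rw [← pow_add]
    congr 1
    lia
  rwa [hrange, ← hm, hk, hl] at hD
end

section
/- Let p be an odd prime and n ≥ 1. Let L be a finite field with |L| = p^n, let K = 𝔽_p, and let G = L^× × K be the group with operation (x, y)(x', y') = (xx', y + y'). Let D ⊆ G be a generalized difference set with parameters (p(p^n−1); p, p^n−1; p^n−1, p^{n−1}; 0, p^{n−1}−1) relative to N₁ = {1} × K and N₂ = L^× × {0}. Then for every i ∈ {1, …, p−1}, setting t_i = p + i(p^n−1), the pair (1, t_i) is a numerical multiplier of D: there exists (a, c) ∈ G such that {(x, t_i·y) : (x, y) ∈ D} = {(a·x, y + c) : (x, y) ∈ D}, where t_i·y denotes the scalar multiple of y ∈ 𝔽_p by the integer t_i. -/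
/-- The number of representations of `(a, b)` as a "difference" `d₁ d₂⁻¹` of two
distinct elements of `D` in the group `G = L^× × K` with operation
`(x, y)(x', y') = (xx', y + y')`. -/
noncomputable def gdsCount {K L : Type*} [Field K] [Field L]
    (D : Set (Lˣ × K)) (a : Lˣ) (b : K) : ℕ :=
  Nat.card {pq : (Lˣ × K) × (Lˣ × K) //
    pq.1 ∈ D ∧ pq.2 ∈ D ∧ pq.1 ≠ pq.2 ∧ pq.1.1 * pq.2.1⁻¹ = a ∧ pq.1.2 - pq.2.2 = b}

/-- A ring `S` spanned by the products of `M`-th roots of unity with the values of a primitive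
additive character `e` of `ZMod p`, together with automorphisms which fix the `M`-th roots of unity
and permute the values of `e`. -/
structure CyclotomicFrame (p M : ℕ) (S : Type*) [CommRing S] where
  /-- The additive character whose values are the `p`-th roots of unity. -/
  e : AddChar (ZMod p) S
  isPrimitive : e.IsPrimitive
  /-- The automorphisms fixing the `M`-th roots of unity. -/
  σ : (ZMod p)ˣ → S ≃+* S
  σ_e : ∀ l b, σ l (e b) = e (l * b)
  σ_root : ∀ l w, w ^ M = 1 → σ l w = w
  span_eq_top : ∀ A : AddSubgroup S, (∀ w b, w ^ M = 1 → w * e b ∈ A) → A = ⊤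

open NumberField in
theorem IsCyclotomicExtension.Rat.nonempty_cyclotomicFrame {p M : ℕ} [Fact p.Prime] [NeZero M]
    (hpM : p.Coprime M) (E : Type*) [Field E] [NumberField E]
    [IsCyclotomicExtension {p * M} ℚ E] :
    Nonempty (CyclotomicFrame p M (𝓞 E)) := by
  have hp : p.Prime := Fact.out
  have : NeZero (p * M) := ⟨mul_ne_zero hp.ne_zero (NeZero.ne M)⟩
  obtain ⟨z, hz, htop, hgal⟩ : ∃ z : 𝓞 E, IsPrimitiveRoot z (p * M) ∧
      Algebra.adjoin ℤ {z} = ⊤ ∧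
      ∀ k : ℕ, k.Coprime (p * M) → ∃ σ : 𝓞 E ≃+* 𝓞 E, σ z = z ^ k := by
    have hζ := IsCyclotomicExtension.zeta_spec (p * M) ℚ E
    have hirr := Polynomial.cyclotomic.irreducible_rat (NeZero.pos (p * M))
    refine ⟨hζ.toInteger, hζ.toInteger_isPrimitiveRoot,
      IsCyclotomicExtension.Rat.adjoin_singleton_eq_top hζ, fun k hk ↦
      ⟨RingOfIntegers.mapRingEquiv (IsCyclotomicExtension.fromZetaAut
        (hζ.pow_of_coprime k hk) hirr).toRingEquiv, ?_⟩⟩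
    ext
    exact IsCyclotomicExtension.fromZetaAut_spec (hζ.pow_of_coprime k hk) hirr
  have hzp : IsPrimitiveRoot (z ^ M) p := hz.pow (NeZero.pos _) (mul_comm _ _)
  have hzM : IsPrimitiveRoot (z ^ p) M := hz.pow (NeZero.pos _) rfl
  have key : ∀ l : (ZMod p)ˣ, ∃ σ : 𝓞 E ≃+* 𝓞 E, ∃ k : ℕ, k ≡ 1 [MOD M] ∧
      k ≡ (l : ZMod p).val [MOD p] ∧ σ z = z ^ k := by
    intro l
    obtain ⟨k, hkp, hkM⟩ := Nat.chineseRemainder hpM (l : ZMod p).val 1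
    have hk : k.Coprime (p * M) := by
      refine Nat.Coprime.mul_right ?_ ?_
      · rw [Nat.Coprime, hkp.gcd_eq]
        exact ZMod.val_coe_unit_coprime l
      · rw [Nat.Coprime, hkM.gcd_eq, Nat.gcd_one_left]
    obtain ⟨σ, hσ⟩ := hgal k hk
    exact ⟨σ, k, hkM, hkp, hσ⟩
  choose σ k hkM hkp hσ using key
  refine ⟨⟨AddChar.zmodChar p hzp.pow_eq_one,
    AddChar.zmodChar_primitive_of_primitive_root p hzp, σ, ?_, ?_, ?_⟩⟩
  · intro l b
    rw [AddChar.zmodChar_apply, AddChar.zmodChar_apply, map_pow, map_pow, hσ,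
      pow_right_comm z, ← pow_mul (z ^ M)]
    refine pow_eq_pow_of_modEq ?_ hzp.pow_eq_one
    rw [ZMod.val_mul]
    exact ((hkp l).mul_right _).trans (Nat.mod_modEq _ _).symm
  · intro l w hw
    obtain ⟨i, -, rfl⟩ := hzM.eq_pow_of_pow_eq_one hw
    rw [map_pow, map_pow, hσ, pow_right_comm z]
    congr 1
    conv_rhs => rw [← pow_one (z ^ p)]
    exact pow_eq_pow_of_modEq (hkM l) hzM.pow_eq_one
  · intro A hA
    rw [eq_top_iff]
    intro x _
    have hx : x ∈ Algebra.adjoin ℤ {z} := by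
      rw [htop]; trivial
    rw [← Subalgebra.mem_toSubmodule, Algebra.adjoin_eq_span] at hx
    refine Submodule.span_le (p := A.toIntSubmodule).mpr ?_ hx
    intro y hy
    obtain ⟨i, rfl⟩ := Submonoid.mem_closure_singleton.mp hy
    obtain ⟨a, ha0, haM⟩ := Nat.chineseRemainder hpM 0 1
    obtain ⟨b, hb1, hb0⟩ := Nat.chineseRemainder hpM 1 0
    obtain ⟨a, rfl⟩ := (Nat.modEq_zero_iff_dvd.mp ha0)
    obtain ⟨b, rfl⟩ := (Nat.modEq_zero_iff_dvd.mp hb0)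
    have h1 : z ^ (p * a + M * b) = z := by
      conv_rhs => rw [← pow_one z]
      refine pow_eq_pow_of_modEq ?_ hz.pow_eq_one
      rw [← Nat.modEq_and_modEq_iff_modEq_mul hpM]
      exact ⟨by simpa using ha0.add hb1, by simpa using haM.add hb0⟩
    have h2 : (z ^ p) ^ (a * i) *
        AddChar.zmodChar p hzp.pow_eq_one ((b * i : ℕ) : ZMod p) = z ^ i := by
      rw [AddChar.zmodChar_apply']
      conv_rhs => rw [← h1]
      ring
    change z ^ i ∈ A
    rw [← h2]
    refine hA _ _ ?_
    rw [pow_right_comm, hzM.pow_eq_one, one_pow]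

/-- An automorphism of a Dedekind domain which acts trivially modulo an element that is nilpotent
modulo `c` maps every divisor of a power of `c` to a multiple of itself. -/
theorem RingEquiv.dvd_apply_of_dvd_pow {S : Type*} [CommRing S] [IsDedekindDomain S]
    (σ : S ≃+* S) {ϖ c : S} {m n : ℕ} (hσ : ∀ z, ϖ ∣ σ z - z) (hc : c ∣ ϖ ^ m) (hc0 : c ≠ 0)
    {x : S} (hx : x ∣ c ^ n) : x ∣ σ x := by
  have hx0 : x ≠ 0 := by
    rintro rfl
    exact pow_ne_zero n hc0 (zero_dvd_iff.mp hx)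
  have hI0 : Ideal.span {x} ≠ ⊥ := by simpa using hx0
  have hprime : ∀ P ∈ UniqueFactorizationMonoid.normalizedFactors (Ideal.span {x}),
      P.map σ.toRingHom = P := by
    intro P hP
    have hPp : Prime P := UniqueFactorizationMonoid.prime_of_normalized_factor P hP
    have hPprime : P.IsPrime := Ideal.isPrime_of_prime hPp
    have hPmax : P.IsMaximal := hPprime.isMaximal hPp.ne_zero
    have hxP : x ∈ P := by
      have := UniqueFactorizationMonoid.dvd_of_mem_normalizedFactors hP
      rw [Ideal.dvd_span_singleton] at this
      exact this
    have hϖ : ϖ ∈ P := by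
      refine hPprime.mem_of_pow_mem m (P.mem_of_dvd hc ?_)
      exact hPprime.mem_of_pow_mem n (P.mem_of_dvd hx hxP)
    have hle : P ≤ P.comap σ.toRingHom := by
      intro z hz
      have := P.add_mem (P.mem_of_dvd (hσ z) hϖ) hz
      simpa using this
    have heq : P = P.comap σ.toRingHom :=
      hPmax.eq_of_le (Ideal.comap_ne_top _ hPprime.ne_top) hle
    conv_lhs => rw [heq]
    exact Ideal.map_comap_of_surjective _ σ.surjective P
  have hmap : (Ideal.span {x}).map σ.toRingHom = Ideal.span {x} := by
    conv_lhs => rw [← Ideal.prod_normalizedFactors_eq_self hI0]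
    conv_rhs => rw [← Ideal.prod_normalizedFactors_eq_self hI0]
    change Ideal.mapHom σ.toRingHom _ = _
    rw [map_multiset_prod]
    congr 1
    conv_rhs => rw [← Multiset.map_id (UniqueFactorizationMonoid.normalizedFactors _)]
    exact Multiset.map_congr rfl hprime
  rw [Ideal.map_span, Set.image_singleton] at hmap
  exact Ideal.span_singleton_le_span_singleton.mp hmap.le

theorem ZMod.sum_units_eq_sum {p : ℕ} [Fact p.Prime] {S : Type*} [AddCommMonoid S]
    (g : ZMod p → S) (hg : g 0 = 0) : ∑ l : (ZMod p)ˣ, g l = ∑ l, g l := by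
  refine Fintype.sum_of_injective _ Units.val_injective _ _ (fun i hi ↦ ?_) fun _ ↦ rfl
  have : i = 0 := by
    by_contra h
    exact hi ⟨Units.mk0 i h, rfl⟩
  rw [this, hg]

namespace CyclotomicFrame

variable {p M : ℕ} [Fact p.Prime] {S : Type*} [CommRing S] (F : CyclotomicFrame p M S)

theorem one_sub_dvd_e_sub_e (a b : ZMod p) : 1 - F.e 1 ∣ F.e a - F.e b := by
  have h (c : ZMod p) : 1 - F.e 1 ∣ 1 - F.e c := by
    have h1 : F.e c = F.e 1 ^ c.val := by
      rw [← AddChar.map_nsmul_eq_pow, nsmul_eq_mul, mul_one, ZMod.natCast_zmod_val]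
    simpa [h1] using sub_dvd_pow_sub_pow 1 (F.e 1) c.val
  simpa using dvd_sub (h b) (h a)

theorem one_sub_dvd_σ_sub (l : (ZMod p)ˣ) (z : S) : 1 - F.e 1 ∣ F.σ l z - z := by
  let A : AddSubgroup S := (Ideal.span {1 - F.e 1}).toAddSubgroup.comap
    ((F.σ l).toAddMonoidHom - AddMonoidHom.id S)
  have hA : A = ⊤ := by
    refine F.span_eq_top A fun w b hw ↦ ?_
    change F.σ l (w * F.e b) - w * F.e b ∈ Ideal.span {1 - F.e 1}
    rw [Ideal.mem_span_singleton, map_mul, F.σ_root l w hw, F.σ_e, ← mul_sub]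
    exact (F.one_sub_dvd_e_sub_e _ _).mul_left w
  have hz : z ∈ A := hA ▸ AddSubgroup.mem_top z
  exact Ideal.mem_span_singleton.mp hz

theorem prime_dvd_one_sub_pow : (p : S) ∣ (1 - F.e 1) ^ p := by
  obtain ⟨r, hr⟩ := exists_add_pow_prime_eq (Fact.out : p.Prime) (1 - F.e 1) (F.e 1)
  have h1 : F.e 1 ^ p = 1 := by
    rw [← AddChar.map_nsmul_eq_pow, nsmul_eq_mul, CharP.cast_eq_zero, zero_mul,
      AddChar.map_zero_eq_one]
  rw [sub_add_cancel, one_pow, h1] at hr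
  refine ⟨-((1 - F.e 1) * F.e 1 * r), ?_⟩
  linear_combination -hr

theorem sum_e_mul [IsDomain S] (b : ZMod p) :
    ∑ l, F.e (l * b) = if b = 0 then (p : S) else 0 := by
  rw [AddChar.sum_mulShift b F.isPrimitive, ZMod.card]
  split_ifs <;> simp

theorem prime_dvd_sum_σ [IsDomain S] (z : S) :
    (p : S) ∣ ∑ l, F.σ l ((1 - F.e 1) * z) := by
  let A : AddSubgroup S := (Ideal.span {(p : S)}).toAddSubgroup.comap
    ((∑ l, (F.σ l).toAddMonoidHom).comp (AddMonoidHom.mulLeft (1 - F.e 1)))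
  have hmem (z : S) : z ∈ A ↔ (p : S) ∣ ∑ l, F.σ l ((1 - F.e 1) * z) := by
    rw [← Ideal.mem_span_singleton]
    simp [A, AddMonoidHom.finsetSum_apply]
  have hA : A = ⊤ := by
    refine F.span_eq_top A fun w b hw ↦ ?_
    rw [hmem]
    have h1 : ∀ l, F.σ l ((1 - F.e 1) * (w * F.e b)) =
        w * (F.e (l * b) - F.e (l * (1 + b))) := by
      intro l
      simp only [map_mul, map_sub, map_one, F.σ_e, F.σ_root l w hw, mul_add,
        AddChar.map_add_eq_mul]
      ring
    simp only [h1]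
    rw [← Finset.mul_sum, ZMod.sum_units_eq_sum (fun l ↦ F.e (l * b) - F.e (l * (1 + b))) (by simp),
      Finset.sum_sub_distrib, F.sum_e_mul, F.sum_e_mul]
    refine Dvd.dvd.mul_left (dvd_sub ?_ ?_) _ <;> split_ifs <;> simp
  exact (hmem z).mp (hA ▸ AddSubgroup.mem_top z)

end CyclotomicFrame

theorem MonoidHom.sum_mul_sum_inv {H S : Type*} [CommGroup H] [Fintype H] [CommRing S]
    (χ : H →* Sˣ) (u v : H → S) :
    (∑ h, (χ h : S) * u h) * ∑ k, (χ k⁻¹ : S) * v k = ∑ a, (χ a : S) * ∑ k, u (a * k) * v k := by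
  simp_rw [Finset.mul_sum]
  conv_rhs => rw [Finset.sum_comm]
  refine Finset.sum_congr rfl fun k _ ↦ ?_
  rw [Finset.sum_mul, ← Equiv.sum_comp (Equiv.mulRight k)]
  refine Finset.sum_congr rfl fun a _ ↦ ?_
  have h : (χ k : S) * χ k⁻¹ = 1 := by rw [← Units.val_mul, ← map_mul]; simp
  simp only [Equiv.coe_mulRight, map_mul, Units.val_mul]
  linear_combination (χ a : S) * u (a * k) * v k * h

theorem MonoidHom.sum_apply_eq_zero {H S : Type*} [Group H] [Fintype H] [CommRing S] [IsDomain S]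
    {χ : H →* Sˣ} (hχ : χ ≠ 1) : ∑ a, (χ a : S) = 0 := by
  refine sum_hom_units_eq_zero ((Units.coeHom S).comp χ) fun h ↦ hχ ?_
  ext a
  exact DFunLike.congr_fun h a

/-- Orthogonality of characters over a domain with enough roots of unity. -/
theorem CommGroup.sum_monoidHom_apply {H S : Type*} [CommGroup H] [Fintype H] [DecidableEq H]
    [CommRing S] [IsDomain S] [HasEnoughRootsOfUnity S (Monoid.exponent H)]
    [Fintype (H →* Sˣ)] (a : H) :
    ∑ χ : H →* Sˣ, (χ a : S) = if a = 1 then (Fintype.card H : S) else 0 := by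
  split_ifs with ha
  · have := CommGroup.card_monoidHom_of_hasEnoughRootsOfUnity H S
    rw [Nat.card_eq_fintype_card, Nat.card_eq_fintype_card] at this
    simp [ha, ← this]
  · obtain ⟨ψ, hψ⟩ := CommGroup.exists_apply_ne_one_of_hasEnoughRootsOfUnity H S ha
    have h : (ψ a : S) * ∑ χ : H →* Sˣ, (χ a : S) = ∑ χ : H →* Sˣ, (χ a : S) := by
      rw [Finset.mul_sum]
      conv_rhs => rw [← Equiv.sum_comp (Equiv.mulLeft ψ)]
      simp
    refine eq_zero_of_mul_eq_self_left ?_ h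
    simpa using hψ

/-- If all character sums of `g` are divisible by `d`, then so is `g` up to the group order. -/
theorem CommGroup.dvd_card_mul_of_forall_dvd_sum {H S : Type*} [CommGroup H] [Fintype H]
    [CommRing S] [IsDomain S] [HasEnoughRootsOfUnity S (Monoid.exponent H)] {d : S} {g : H → S}
    (hg : ∀ χ : H →* Sˣ, d ∣ ∑ b, (χ b : S) * g b) (a : H) : d ∣ Fintype.card H * g a := by
  classical
  have := Fintype.ofFinite (H →* Sˣ)
  have key : (Fintype.card H : S) * g a =
      ∑ χ : H →* Sˣ, (χ a⁻¹ : S) * ∑ b, (χ b : S) * g b := by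
    simp_rw [Finset.mul_sum]
    rw [Finset.sum_comm]
    simp_rw [← mul_assoc, ← Units.val_mul, ← map_mul, ← Finset.sum_mul,
      CommGroup.sum_monoidHom_apply, inv_mul_eq_one]
    simp
  rw [key]
  exact Finset.dvd_sum fun χ _ ↦ (hg χ).mul_left _

open Finset in
theorem Fintype.sum_comp_eq_sum_card_mul {X Y S : Type*} [Fintype X] [Fintype Y] [DecidableEq Y]
    [CommRing S] (g : X → Y) (u : Y → S) :
    ∑ x, u (g x) = ∑ y, (#{x | g x = y} : S) * u y := by
  rw [← Finset.sum_fiberwise univ g]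
  refine Finset.sum_congr rfl fun y _ ↦ ?_
  rw [Finset.sum_congr rfl fun x hx ↦ by rw [(Finset.mem_filter.mp hx).2], Finset.sum_const,
    nsmul_eq_mul]

section DifferenceBalanced

open Finset

/-- A function `f` on a finite group of order `p ^ (n + 1) - 1` such that every difference
`f (a * x) - f x` with `a ≠ 1` is as equidistributed as possible. -/
structure DifferenceBalanced {H : Type*} [CommGroup H] [Fintype H] {p : ℕ} (n : ℕ)
    (f : H → ZMod p) : Prop where
  card_eq : Fintype.card H + 1 = p ^ (n + 1)
  card_filter : ∀ a ≠ 1, ∀ b,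
    (#{x | f (a * x) - f x = b} : ℤ) = p ^ n - if b = 0 then 1 else 0

namespace DifferenceBalanced

variable {H : Type*} [CommGroup H] [Fintype H] {p n : ℕ} [Fact p.Prime] {f : H → ZMod p}

section CharacterSums

variable {S : Type*} [CommRing S]

theorem sum_mul_sum_inv [IsDomain S] (hf : DifferenceBalanced n f) {M : ℕ}
    (F : CyclotomicFrame p M S) {χ : H →* Sˣ} (hχ : χ ≠ 1) :
    (∑ h, (χ h : S) * F.e (f h)) * ∑ k, (χ k⁻¹ : S) * F.e (-f k) = (p : S) ^ (n + 1) := by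
  classical
  have hinner (a : H) : ∑ k, F.e (f (a * k)) * F.e (-f k) =
      (if a = 1 then (p : S) ^ (n + 1) else 0) - 1 := by
    simp_rw [← AddChar.map_add_eq_mul, ← sub_eq_add_neg]
    split_ifs with ha
    · have := congrArg (Nat.cast : ℕ → S) hf.card_eq
      push_cast at this
      simp [ha, ← this]
    · have hS (b : ZMod p) : (#{x | f (a * x) - f x = b} : S) = p ^ n - if b = 0 then 1 else 0 := by
        have := congrArg (Int.cast : ℤ → S) (hf.card_filter a ha b)
        push_cast at this
        exact this
      have h0 : ∑ b, F.e b = 0 := by simpa using F.sum_e_mul 1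
      rw [Fintype.sum_comp_eq_sum_card_mul (fun x ↦ f (a * x) - f x)]
      simp_rw [hS, sub_mul]
      rw [Finset.sum_sub_distrib, ← Finset.mul_sum, h0]
      simp
  rw [χ.sum_mul_sum_inv]
  simp_rw [hinner, mul_sub, Finset.sum_sub_distrib, mul_one, MonoidHom.sum_apply_eq_zero hχ]
  simp

theorem pow_dvd_sum [CharZero S] [IsDedekindDomain S] (hf : DifferenceBalanced n f)
    (F : CyclotomicFrame p (Fintype.card H) S) (s : (ZMod p)ˣ) (y z : ZMod p)
    {χ : H →* Sˣ} (hχ : χ ≠ 1) :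
    (p : S) ^ (n + 1) ∣ ∑ a, (χ a : S) *
      ((#{x | s * f (a * x) - f x = y} : S) - #{x | s * f (a * x) - f x = z}) := by
  have hp0 : (p : S) ≠ 0 := Nat.cast_ne_zero.mpr (Fact.out : p.Prime).ne_zero
  have hσχ (l : (ZMod p)ˣ) (a : H) : F.σ l (χ a) = χ a :=
    F.σ_root l _ (by rw [← Units.val_pow_eq_pow_val, ← map_pow, pow_card_eq_one]; simp)
  set x := ∑ h, (χ h : S) * F.e (f h) with hx
  set x' := ∑ k, (χ k⁻¹ : S) * F.e (-f k) with hx'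
  have hxx' : x * x' = (p : S) ^ (n + 1) := hf.sum_mul_sum_inv F hχ
  obtain ⟨u, hu⟩ : x ∣ F.σ s x :=
    (F.σ s).dvd_apply_of_dvd_pow (F.one_sub_dvd_σ_sub s) F.prime_dvd_one_sub_pow hp0
      (Dvd.intro _ hxx')
  obtain ⟨v, hv⟩ := F.one_sub_dvd_e_sub_e (-y) (-z)
  obtain ⟨t, ht⟩ := F.prime_dvd_sum_σ (v * u)
  have hcard (a : H) (c : ZMod p) : (p : S) * #{x | s * f (a * x) - f x = c} =
      ∑ l, F.e (-(l * c)) * ∑ k, F.e (l * (s * f (a * k))) * F.e (-(l * f k)) := by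
    simp_rw [Finset.mul_sum, ← AddChar.map_add_eq_mul]
    rw [Finset.sum_comm]
    have h1 (k : H) : ∑ l, F.e (-(l * c) + (l * (s * f (a * k)) + -(l * f k))) =
        if s * f (a * k) - f k = c then (p : S) else 0 := by
      simp_rw [← sub_eq_zero (b := c), ← F.sum_e_mul]
      refine Finset.sum_congr rfl fun l _ ↦ ?_
      ring_nf
    simp_rw [h1, ← Finset.sum_filter, Finset.sum_const, nsmul_eq_mul, mul_comm]
  have hσ (l : (ZMod p)ˣ) : F.σ l ((F.e (-y) - F.e (-z)) * (F.σ s x * x')) =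
      (F.e (-(l * y)) - F.e (-(l * z))) *
        ∑ a, (χ a : S) * ∑ k, F.e (l * (s * f (a * k))) * F.e (-(l * f k)) := by
    rw [← χ.sum_mul_sum_inv (fun h ↦ F.e (l * (s * f h))) (fun k ↦ F.e (-(l * f k)))]
    simp only [hx, hx', map_mul, map_sub, map_sum, F.σ_e, hσχ, mul_neg]
  have key : (p : S) * ∑ a, (χ a : S) *
      ((#{x | s * f (a * x) - f x = y} : S) - #{x | s * f (a * x) - f x = z}) =
      ∑ l, F.σ l ((F.e (-y) - F.e (-z)) * (F.σ s x * x')) := by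
    simp_rw [hσ]
    rw [ZMod.sum_units_eq_sum (fun l : ZMod p ↦ (F.e (-(l * y)) - F.e (-(l * z))) *
        ∑ a, (χ a : S) * ∑ k, F.e (l * (s * f (a * k))) * F.e (-(l * f k))) (by simp)]
    rw [Finset.mul_sum]
    trans ∑ a, ∑ l : ZMod p, (F.e (-(l * y)) - F.e (-(l * z))) *
      ((χ a : S) * ∑ k, F.e (l * (s * f (a * k))) * F.e (-(l * f k)))
    · refine Finset.sum_congr rfl fun a _ ↦ ?_
      rw [mul_left_comm, mul_sub (p : S), hcard, hcard, ← Finset.sum_sub_distrib, Finset.mul_sum]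
      exact Finset.sum_congr rfl fun l _ ↦ by ring
    · rw [Finset.sum_comm]
      exact Finset.sum_congr rfl fun l _ ↦ (Finset.mul_sum _ _ _).symm
  refine ⟨t, mul_left_cancel₀ hp0 ?_⟩
  clear_value x x'
  rw [key, mul_left_comm (p : S), ← ht, Finset.mul_sum]
  refine Finset.sum_congr rfl fun l _ ↦ ?_
  have hq : F.σ l ((p : S) ^ (n + 1)) = (p : S) ^ (n + 1) := by simp
  conv_rhs => rw [← hq, ← map_mul]
  congr 1
  rw [hu, hv, ← hxx']
  ring

end CharacterSums

theorem sum_card_filter (f : H → ZMod p) (s : (ZMod p)ˣ) (y : ZMod p) :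
    ∑ a, (#{x | s * f (a * x) - f x = y} : ℤ) =
      ∑ b, (#{x | f x = b} : ℤ) * #{x | f x = ↑s⁻¹ * (y + b)} := by
  rw [← Fintype.sum_comp_eq_sum_card_mul f (fun b ↦ (#{x | f x = ↑s⁻¹ * (y + b)} : ℤ))]
  simp_rw [Finset.card_filter, Nat.cast_sum]
  rw [Finset.sum_comm]
  refine Finset.sum_congr rfl fun x _ ↦ ?_
  rw [← Equiv.sum_comp (Equiv.mulRight x)
    (fun h ↦ ((if f h = ↑s⁻¹ * (y + f x) then 1 else 0 : ℕ) : ℤ))]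
  refine Finset.sum_congr rfl fun a _ ↦ ?_
  simp only [Equiv.coe_mulRight, Units.eq_inv_mul_iff_mul_eq, sub_eq_iff_eq_add]

/-- A difference balanced function takes all values equally often, but for one value which is
taken once less. -/
theorem exists_card_filter_eq (hf : DifferenceBalanced n f) :
    ∃ b₀, ∀ b, (#{x | f x = b} : ℤ) = p ^ n - if b = b₀ then 1 else 0 := by
  classical
  have hcard : (Fintype.card H : ℤ) = p * p ^ n - 1 := by
    have := congrArg (Nat.cast : ℕ → ℤ) hf.card_eq
    push_cast at this
    rw [pow_succ'] at this
    linarith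
  have h1 : ∑ b, (#{x | f x = b} : ℤ) = Fintype.card H := by
    simpa using (Fintype.sum_comp_eq_sum_card_mul f (fun _ ↦ (1 : ℤ))).symm
  have h2 : ∑ b, (#{x | f x = b} : ℤ) * #{x | f x = b} = (p * p ^ n - 2) * p ^ n + 1 := by
    have h := sum_card_filter f 1 0
    simp only [Units.val_one, one_mul, inv_one, zero_add] at h
    rw [← h, ← Finset.add_sum_erase _ _ (Finset.mem_univ 1),
      Finset.sum_congr rfl fun a ha ↦ hf.card_filter a (Finset.ne_of_mem_erase ha) 0]
    simp only [one_mul, sub_self, Finset.filter_true, Finset.card_univ, Finset.sum_const,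
      Finset.card_erase_of_mem (Finset.mem_univ _), nsmul_eq_mul, if_true]
    rw [Nat.cast_sub Fintype.card_pos, hcard]
    push_cast
    ring
  have h3 : ∑ b : ZMod p, ((p ^ n - #{x | f x = b} : ℤ) ^ 2 - (p ^ n - #{x | f x = b})) = 0 := by
    have h (b : ZMod p) : ((p ^ n - #{x | f x = b} : ℤ) ^ 2 - (p ^ n - #{x | f x = b})) =
        (p ^ n * p ^ n - p ^ n) - (2 * p ^ n - 1) * #{x | f x = b} +
          #{x | f x = b} * #{x | f x = b} := by ring
    simp_rw [h]
    rw [Finset.sum_add_distrib, Finset.sum_sub_distrib, ← Finset.mul_sum, h1, h2, hcard]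
    simp only [Finset.sum_const, Finset.card_univ, ZMod.card, nsmul_eq_mul]
    ring
  have h4 (b : ZMod p) : (p ^ n - #{x | f x = b} : ℤ) = 0 ∨ (p ^ n - #{x | f x = b} : ℤ) = 1 := by
    have hnonneg (m : ℤ) : 0 ≤ m ^ 2 - m := by
      rcases le_or_gt m 0 with h | h <;> nlinarith
    have := (Finset.sum_eq_zero_iff_of_nonneg fun b _ ↦ hnonneg _).mp h3 b (Finset.mem_univ b)
    rw [pow_two, ← mul_sub_one, mul_eq_zero] at this
    exact this.imp_right sub_eq_zero.mp
  have h5 : ∑ b : ZMod p, (p ^ n - #{x | f x = b} : ℤ) = 1 := by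
    rw [Finset.sum_sub_distrib, h1, hcard]
    simp
  obtain ⟨b₀, -, hb₀⟩ := Finset.exists_ne_zero_of_sum_ne_zero (h5.trans_ne one_ne_zero)
  have hb₀1 := (h4 b₀).resolve_left hb₀
  refine ⟨b₀, fun b ↦ ?_⟩
  split_ifs with hb
  · rw [hb]
    linarith
  · rw [← Finset.add_sum_erase _ _ (Finset.mem_univ b₀), hb₀1, add_eq_left,
      Finset.sum_eq_zero_iff_of_nonneg fun b _ ↦ by rcases h4 b with h | h <;> simp [h]] at h5
    linarith [h5 b (by simp [hb])]

theorem sum_card_filter_eq {b₀ : ZMod p}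
    (hb₀ : ∀ b, (#{x | f x = b} : ℤ) = p ^ n - if b = b₀ then 1 else 0)
    (s : (ZMod p)ˣ) (y : ZMod p) :
    ∑ a, (#{x | s * f (a * x) - f x = y} : ℤ) =
      p ^ n * Fintype.card H - p ^ n + if y = s * b₀ - b₀ then 1 else 0 := by
  have h1 : ∑ b, (#{x | f x = ↑s⁻¹ * (y + b)} : ℤ) = Fintype.card H := by
    refine (Equiv.sum_comp ((Equiv.addLeft y).trans (Units.mulLeft s⁻¹))
      (fun b ↦ (#{x | f x = b} : ℤ))).trans ?_
    simpa using (Fintype.sum_comp_eq_sum_card_mul f (fun _ ↦ (1 : ℤ))).symm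
  rw [sum_card_filter]
  simp_rw [hb₀ _, sub_mul]
  simp_rw [← hb₀]
  rw [Finset.sum_sub_distrib, ← Finset.mul_sum, h1]
  simp only [ite_mul, one_mul, zero_mul, Finset.sum_ite_eq', Finset.mem_univ, if_true, hb₀,
    Units.inv_mul_eq_iff_eq_mul, eq_sub_iff_add_eq]
  ring

end DifferenceBalanced

theorem NumberField.RingOfIntegers.intCast_dvd_intCast {E : Type*} [Field E] [NumberField E]
    {m k : ℤ} : (m : NumberField.RingOfIntegers E) ∣ k ↔ m ∣ k := by
  refine ⟨fun ⟨t, ht⟩ ↦ ?_, fun h ↦ Int.cast_dvd_cast m k h⟩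
  rcases eq_or_ne m 0 with rfl | hm
  · simpa using ht
  have ht' : algebraMap ℚ E (k / m) = t := by
    have h := congrArg (algebraMap (NumberField.RingOfIntegers E) E) ht
    simp only [map_intCast, map_mul] at h
    rw [map_div₀, map_intCast, map_intCast, div_eq_iff (Int.cast_ne_zero.mpr hm), h, mul_comm]
  have hint : IsIntegral ℤ ((k : ℚ) / m) := by
    rw [← isIntegral_algebraMap_iff (algebraMap ℚ E).injective, ht']
    exact t.isIntegral_coe
  obtain ⟨r, hr⟩ := IsIntegrallyClosed.isIntegral_iff.mp hint
  rw [eq_div_iff (Int.cast_ne_zero.mpr hm), eq_intCast] at hr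
  refine ⟨r, ?_⟩
  rw [mul_comm]
  exact_mod_cast hr.symm

theorem IsCyclotomicExtension.Rat.hasEnoughRootsOfUnity {N m : ℕ} [NeZero N] (hm : m ∣ N)
    (E : Type*) [Field E] [NumberField E] [IsCyclotomicExtension {N} ℚ E] :
    HasEnoughRootsOfUnity (NumberField.RingOfIntegers E) m :=
  have : HasEnoughRootsOfUnity (NumberField.RingOfIntegers E) N :=
    { prim := ⟨_, (IsCyclotomicExtension.zeta_spec N ℚ E).toInteger_isPrimitiveRoot⟩
      cyc := rootsOfUnity.isCyclic _ _ }
  .of_dvd _ hm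

namespace DifferenceBalanced

variable {H : Type*} [CommGroup H] [Fintype H] {p n : ℕ} [Fact p.Prime] {f : H → ZMod p}

theorem pow_dvd_card_filter_sub (hf : DifferenceBalanced n f) {b₀ : ZMod p}
    (hb₀ : ∀ b, (#{x | f x = b} : ℤ) = p ^ n - if b = b₀ then 1 else 0) (s : (ZMod p)ˣ)
    {z : ZMod p} (hz : z ≠ s * b₀ - b₀) (a : H) :
    (p : ℤ) ^ (n + 1) ∣ (#{x | s * f (a * x) - f x = s * b₀ - b₀} : ℤ) -
      #{x | s * f (a * x) - f x = z} + 1 := by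
  have hcop : p.Coprime (Fintype.card H) := by
    have h : p ∣ Fintype.card H + 1 := hf.card_eq ▸ dvd_pow_self p n.succ_ne_zero
    refine ((Fact.out : p.Prime).coprime_iff_not_dvd).mpr fun h' ↦ ?_
    exact (Fact.out : p.Prime).one_lt.ne' (Nat.dvd_one.mp ((Nat.dvd_add_right h').mp h))
  have : NeZero (Fintype.card H) := ⟨Fintype.card_ne_zero⟩
  have : NeZero (p * Fintype.card H) :=
    ⟨mul_ne_zero (Fact.out : p.Prime).ne_zero Fintype.card_ne_zero⟩
  let E := CyclotomicField (p * Fintype.card H) ℚ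
  have : IsCyclotomicExtension {p * Fintype.card H} ℚ E :=
    CyclotomicField.isCyclotomicExtension _ ℚ
  have : NumberField E := IsCyclotomicExtension.numberField {p * Fintype.card H} ℚ E
  let S := NumberField.RingOfIntegers E
  obtain ⟨F⟩ := IsCyclotomicExtension.Rat.nonempty_cyclotomicFrame hcop E
  have : HasEnoughRootsOfUnity S (Monoid.exponent H) :=
    IsCyclotomicExtension.Rat.hasEnoughRootsOfUnity
      (Group.exponent_dvd_card.trans (Dvd.intro_left p rfl)) E
  have hsum : ∑ a, ((#{x | s * f (a * x) - f x = s * b₀ - b₀} : ℤ) -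
      #{x | s * f (a * x) - f x = z}) = 1 := by
    rw [Finset.sum_sub_distrib, sum_card_filter_eq hb₀, sum_card_filter_eq hb₀, if_pos rfl,
      if_neg hz]
    ring
  have hdvd := CommGroup.dvd_card_mul_of_forall_dvd_sum (S := S) (d := ((p ^ (n + 1) : ℤ) : S))
    (g := fun a ↦ (((#{x | s * f (a * x) - f x = s * b₀ - b₀} : ℤ) -
      #{x | s * f (a * x) - f x = z} + 1 : ℤ) : S)) (fun χ ↦ ?_) a
  · have h : IsCoprime ((p : ℤ) ^ (n + 1)) (Fintype.card H : ℤ) :=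
      (Nat.isCoprime_iff_coprime.mpr hcop).pow_left
    rw [← Int.cast_natCast (Fintype.card H), ← Int.cast_mul,
      NumberField.RingOfIntegers.intCast_dvd_intCast] at hdvd
    exact h.dvd_of_dvd_mul_left hdvd
  · by_cases hχ : χ = 1
    · have hcard := congrArg (Nat.cast : ℕ → ℤ) hf.card_eq
      push_cast at hcard
      simp only [hχ, MonoidHom.one_apply, Units.val_one, one_mul]
      rw [← Int.cast_sum, Finset.sum_add_distrib, hsum, ← hcard]
      simp [add_comm]
    · have h := hf.pow_dvd_sum F s (s * b₀ - b₀) z hχ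
      push_cast
      simp only [mul_add, Finset.sum_add_distrib, mul_one, MonoidHom.sum_apply_eq_zero hχ, add_zero]
      exact h

/-- Every unit of `ZMod p` is a multiplier of a difference balanced function. -/
theorem exists_mul_comp_eq_add (hf : DifferenceBalanced n f) (s : (ZMod p)ˣ) :
    ∃ a c, ∀ x, s * f (a * x) = f x + c := by
  obtain ⟨b₀, hb₀⟩ := hf.exists_card_filter_eq
  have hz : s * b₀ - b₀ + 1 ≠ s * b₀ - b₀ := by simp
  have hcard := congrArg (Nat.cast : ℕ → ℤ) hf.card_eq
  push_cast at hcard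
  have hsum : ∑ a, ((#{x | s * f (a * x) - f x = s * b₀ - b₀} : ℤ) -
      #{x | s * f (a * x) - f x = s * b₀ - b₀ + 1}) = 1 := by
    rw [Finset.sum_sub_distrib, sum_card_filter_eq hb₀, sum_card_filter_eq hb₀, if_pos rfl,
      if_neg hz]
    ring
  obtain ⟨a, -, ha⟩ := Finset.exists_lt_of_sum_lt
    (show ∑ _a : H, (0 : ℤ) < _ from by rw [hsum]; simp)
  refine ⟨a, s * b₀ - b₀, fun x ↦ ?_⟩
  have hle := Int.le_of_dvd (by linarith) (hf.pow_dvd_card_filter_sub hb₀ s hz a)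
  have huniv : #{x | s * f (a * x) - f x = s * b₀ - b₀} = #(univ : Finset H) := by
    refine le_antisymm (card_le_univ _) ?_
    rw [card_univ]
    have := Int.natCast_nonneg #{x | s * f (a * x) - f x = s * b₀ - b₀ + 1}
    zify
    linarith
  have hx := (Finset.card_filter_eq_iff.mp huniv) x (mem_univ x)
  linear_combination hx

end DifferenceBalanced

end DifferenceBalanced

theorem gdsCount_graph {K L : Type*} [Field K] [Field L] (f : Lˣ → K) {a : Lˣ} (ha : a ≠ 1)
    (b : K) : gdsCount {d | f d.1 = d.2} a b = Nat.card {x // f (a * x) - f x = b} := by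
  refine (Nat.card_congr (Equiv.ofBijective
    (fun x ↦ ⟨((a * x, f (a * x)), (x, f x)), rfl, rfl, by simp [ha], by simp, x.2⟩)
    ⟨fun x x' h ↦ ?_, ?_⟩)).symm
  · simp_all [Subtype.ext_iff]
  · rintro ⟨⟨⟨x₁, y₁⟩, ⟨x₂, y₂⟩⟩, (h₁ : f x₁ = y₁), (h₂ : f x₂ = y₂), -, h₃, h₄⟩
    obtain rfl : x₁ = a * x₂ := mul_inv_eq_iff_eq_mul.mp h₃
    subst h₁ h₂
    exact ⟨⟨x₂, h₄⟩, rfl⟩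

/-- A set of size `|Lˣ|` with no differences in `{1} × K` is the graph of a function. -/
theorem exists_eq_graph_of_gdsCount_one_eq_zero {K L : Type*} [Field K] [Field L] [Finite K]
    [Finite L] {D : Set (Lˣ × K)} (hcard : Nat.card D = Nat.card Lˣ)
    (hD : ∀ b : K, b ≠ 0 → gdsCount D 1 b = 0) : ∃ f : Lˣ → K, D = {d | f d.1 = d.2} := by
  have hinj : Function.Injective fun d : D ↦ d.1.1 := by
    rintro ⟨⟨x, y⟩, hd⟩ ⟨⟨x', y'⟩, hd'⟩ (rfl : x = x')
    by_contra h
    have hy : y ≠ y' := by simpa using h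
    refine ((Nat.card_eq_zero.mp (hD _ (sub_ne_zero.mpr hy))).resolve_right
      (not_infinite_iff_finite.mpr inferInstance)).false ⟨((x, y), (x, y')), hd, hd', ?_, ?_, rfl⟩
    · simp [hy]
    · simp
  have hbij := (Nat.bijective_iff_injective_and_card _).mpr ⟨hinj, hcard⟩
  refine ⟨fun x ↦ ((Equiv.ofBijective _ hbij).symm x).1.2, Set.ext fun d ↦ ⟨fun hd ↦ ?_, ?_⟩⟩
  · have h : (Equiv.ofBijective _ hbij).symm d.1 = ⟨d, hd⟩ :=
      (Equiv.symm_apply_eq _).mpr rfl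
    simp [h]
  · rintro (h : _ = d.2)
    have h' := (Equiv.ofBijective _ hbij).apply_symm_apply d.1
    have : ((Equiv.ofBijective _ hbij).symm d.1).1 = d := Prod.ext h' h
    exact this ▸ Subtype.coe_prop _

theorem natCast_add_mul_pow_sub_one_ne_zero {p n i : ℕ} (hp : p.Prime) (hn : 1 ≤ n) (hi : 1 ≤ i)
    (hip : i ≤ p - 1) : ((p + i * (p ^ n - 1) : ℕ) : ZMod p) ≠ 0 := by
  have : Fact p.Prime := ⟨hp⟩
  have h0 : ((i : ℕ) : ZMod p) ≠ 0 := by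
    rw [Ne, ZMod.natCast_eq_zero_iff]
    exact Nat.not_dvd_of_pos_of_lt hi (by have := hp.pos; lia)
  rw [Nat.cast_add, Nat.cast_mul, Nat.cast_sub (Nat.one_le_pow _ _ hp.pos)]
  simpa [zero_pow (Nat.one_le_iff_ne_zero.mp hn)] using h0

/-- If `D` is a generalized difference set with parameters
`(p(pⁿ−1); p, pⁿ−1; pⁿ−1, p^{n−1}; 0, p^{n−1}−1)` in `G = L^× × K` relative to
`N₁ = {1} × K` and `N₂ = L^× × {0}`, then every `(1, tᵢ)` with
`tᵢ = p + i(pⁿ−1)`, `1 ≤ i ≤ p−1`, is a numerical multiplier of `D`. -/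
theorem stmt_11 {K L : Type*} [Field K] [Field L] [Fintype K] [Fintype L]
    (p n : ℕ) (hp : p.Prime) (hodd : Odd p) (hn : 1 ≤ n)
    (hK : Fintype.card K = p) (hL : Fintype.card L = p ^ n)
    (D : Set (Lˣ × K))
    (hcard : Nat.card D = p ^ n - 1)
    (hlam : ∀ a : Lˣ, ∀ b : K, a ≠ 1 → b ≠ 0 → gdsCount D a b = p ^ (n - 1))
    (hN₁ : ∀ b : K, b ≠ 0 → gdsCount D 1 b = 0)
    (hN₂ : ∀ a : Lˣ, a ≠ 1 → gdsCount D a 0 = p ^ (n - 1) - 1) :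
    ∀ i : ℕ, 1 ≤ i → i ≤ p - 1 →
      ∃ a : Lˣ, ∃ c : K,
        (fun d : Lˣ × K => (d.1, (p + i * (p ^ n - 1)) • d.2)) '' D =
          (fun d : Lˣ × K => (a * d.1, d.2 + c)) '' D := by
  intro i hi hip
  have : Fact p.Prime := ⟨hp⟩
  let e : K ≃+* ZMod p := (ZMod.ringEquivOfPrime K hp hK).symm
  classical
  have hunits : Fintype.card Lˣ + 1 = p ^ n := by
    rw [Fintype.card_units, hL]
    exact Nat.sub_add_cancel (Nat.one_le_pow _ _ hp.pos)
  obtain ⟨f, rfl⟩ := exists_eq_graph_of_gdsCount_one_eq_zero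
    (by rw [hcard, ← hunits, Nat.card_eq_fintype_card]; rfl) hN₁
  obtain ⟨m, rfl⟩ := Nat.exists_eq_add_of_le' hn
  have hf : DifferenceBalanced m fun x ↦ e (f x) := by
    refine ⟨hunits, fun a ha b ↦ ?_⟩
    have hcount : (Finset.card {x | e (f (a * x)) - e (f x) = b} : ℕ) =
        gdsCount {d | f d.1 = d.2} a (e.symm b) := by
      rw [gdsCount_graph f ha, Nat.card_eq_fintype_card, Fintype.card_subtype]
      simp_rw [← map_sub, ← e.eq_symm_apply]
    rw [hcount]
    split_ifs with hb
    · rw [hb, map_zero, hN₂ a ha, Nat.cast_sub (Nat.one_le_pow _ _ hp.pos)]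
      simp
    · rw [hlam a _ ha (by simpa using hb)]
      simp
  obtain ⟨a, c, hac⟩ := hf.exists_mul_comp_eq_add
    (Units.mk0 _ (natCast_add_mul_pow_sub_one_ne_zero hp hn hi hip))
  have hac' (x : Lˣ) : (p + i * (p ^ (m + 1) - 1)) • f (a * x) = f x + e.symm c := by
    apply e.injective
    rw [map_add, e.apply_symm_apply, ← hac x, map_nsmul, nsmul_eq_mul, Units.val_mk0]
  refine ⟨a, e.symm c, Set.ext fun d ↦ ⟨?_, ?_⟩⟩
  · rintro ⟨⟨x, y⟩, (rfl : f x = y), rfl⟩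
    exact ⟨(a⁻¹ * x, f (a⁻¹ * x)), rfl, by simp [← hac']⟩
  · rintro ⟨⟨x, y⟩, (rfl : f x = y), rfl⟩
    exact ⟨(a * x, f (a * x)), rfl, by simp [hac']⟩
end

section
/- Let p be an odd prime and n ≥ 1. Let L be a finite field with |L| = p^n and K = 𝔽_p. Suppose f : L∖{0} → K is surjective onto K and difference balanced. Then the following are equivalent: (a) for every t ∈ K∖{0} there exists a ∈ L∖{0} such that {(x, t·f(x)) : x ∈ L∖{0}} = {(a·x, f(x)) : x ∈ L∖{0}} as subsets of L × K (i.e., the pairs (1,t), t ∈ K∖{0}, are multipliers of the graph D = {(x, f(x))} with D^{(1,t)} = (a,0)D); (b) f is d-homogeneous, i.e., there exists an integer d with gcd(d, p−1) = 1 such that f(cx) = c^d f(x) for all x ∈ L∖{0} and all c ∈ K∖{0}. -/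
/-- An element of a field extension of a finite field `K` whose `(|K| - 1)`-th power is one
comes from `K`. -/
theorem exists_unit_algebraMap_eq_of_pow_eq_one {K L : Type*} [Field K] [Field L] [Algebra K L]
    [Fintype K] {b : L} (hb : b ^ (Fintype.card K - 1) = 1) :
    ∃ u : Kˣ, algebraMap K L u = b := by
  obtain ⟨ζ, hζ⟩ := IsCyclic.exists_generator (α := Kˣ)
  have hord : orderOf ζ = Fintype.card K - 1 := by
    rw [orderOf_eq_card_of_forall_mem_zpowers hζ, Nat.card_units, Nat.card_eq_fintype_card]
  have hprim : IsPrimitiveRoot (algebraMap K L (ζ : K)) (Fintype.card K - 1) := by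
    rw [← hord]
    exact ((IsPrimitiveRoot.orderOf ζ).map_of_injective Units.val_injective
      (f := Units.coeHom K)).map_of_injective (algebraMap K L).injective
  have : NeZero (Fintype.card K - 1) := ⟨hord ▸ (orderOf_pos ζ).ne'⟩
  obtain ⟨i, -, hi⟩ := hprim.eq_pow_of_pow_eq_one hb
  exact ⟨ζ ^ i, by simpa using hi⟩

/-- An injective endomorphism of a finite cyclic group is a power map with exponent coprime to
the order of the group. -/
theorem exists_coprime_pow_of_injective {G : Type*} [Group G] [Finite G] [IsCyclic G]
    (σ : G →* G) (hσ : Function.Injective σ) :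
    ∃ d : ℕ, d.Coprime (Nat.card G) ∧ ∀ g, σ g = g ^ d := by
  obtain ⟨ζ, hζ⟩ := IsCyclic.exists_generator (α := G)
  have hord := orderOf_eq_card_of_forall_mem_zpowers hζ
  obtain ⟨m, hm⟩ := MonoidHom.map_cyclic σ
  have hpos : (0 : ℤ) < Nat.card G := by exact_mod_cast Nat.card_pos
  have hcast : ((m % Nat.card G).toNat : ℤ) = m % Nat.card G :=
    Int.toNat_of_nonneg (Int.emod_nonneg _ hpos.ne')
  have hd : ∀ g, σ g = g ^ (m % Nat.card G).toNat := fun g => by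
    rw [← zpow_natCast, hcast, zpow_mod_natCard, hm]
  refine ⟨_, ?_, hd⟩
  have h := orderOf_injective σ hσ ζ
  rw [hd, orderOf_pow, hord] at h
  rw [Nat.coprime_comm]
  exact (Nat.div_eq_self.mp h).resolve_left Nat.card_pos.ne'

/-- A difference balanced function has no nontrivial multiplicative period. -/
theorem IsDiffBalanced.eq_one_of_forall_mul_eq {K L : Type*} [Field K] [Field L] {q n : ℕ}
    {f : L → K} (hf : IsDiffBalanced q n f) (hq : q ≠ 0) {u : L} (hu : u ≠ 0)
    (h : ∀ x, x ≠ 0 → f (u * x) = f x) : u = 1 := by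
  by_contra hne
  have hcard := (hf u hu hne).2 1 one_ne_zero
  have hempty : {x : L | x ≠ 0 ∧ f (u * x) - f x = 1} = ∅ := by
    ext x
    simp +contextual [h]
  rw [hempty] at hcard
  exact pow_ne_zero _ hq (by simpa using hcard.symm)

/-- The translate condition on the graph of `f`, read as a functional equation. -/
theorem graph_eq_translate_iff {K L : Type*} [Field K] [Field L] (f : L → K) (t : K) {a : L}
    (ha : a ≠ 0) :
    {pr : L × K | ∃ x : L, x ≠ 0 ∧ pr = (x, t * f x)} =
        {pr : L × K | ∃ x : L, x ≠ 0 ∧ pr = (a * x, f x)} ↔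
      ∀ x, x ≠ 0 → f (a⁻¹ * x) = t * f x := by
  constructor
  · intro h x hx
    have hmem : (x, t * f x) ∈ {pr : L × K | ∃ x : L, x ≠ 0 ∧ pr = (a * x, f x)} :=
      h ▸ ⟨x, hx, rfl⟩
    obtain ⟨y, -, hy⟩ := hmem
    obtain ⟨rfl, h₂⟩ := Prod.mk.inj hy
    rw [h₂, inv_mul_cancel_left₀ ha]
  · intro h
    ext ⟨x, k⟩
    simp only [Set.mem_ofPred_eq, Prod.mk.injEq]
    constructor
    · rintro ⟨y, hy, rfl, rfl⟩
      exact ⟨a⁻¹ * x, mul_ne_zero (inv_ne_zero ha) hy, (mul_inv_cancel_left₀ ha x).symm,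
        (h x hy).symm⟩
    · rintro ⟨y, hy, rfl, rfl⟩
      refine ⟨a * y, mul_ne_zero ha hy, rfl, ?_⟩
      rw [← h _ (mul_ne_zero ha hy), inv_mul_cancel_left₀ ha]

/-- If a scaling of a difference balanced `f` is realized by a dilation of `L`, then it is
realized by a dilation by an element of `K`. -/
theorem IsDiffBalanced.exists_unit_scaling {K L : Type*} [Field K] [Field L] [Algebra K L]
    [Fintype K] {q n : ℕ} {f : L → K} (hf : IsDiffBalanced q n f) (hq : q ≠ 0) (t : Kˣ) {b : L}
    (hb : b ≠ 0) (h : ∀ x, x ≠ 0 → f (b * x) = t * f x) :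
    ∃ u : Kˣ, ∀ x, x ≠ 0 → f (algebraMap K L u * x) = t * f x := by
  have hpow : ∀ k : ℕ, ∀ x, x ≠ 0 → f (b ^ k * x) = (t : K) ^ k * f x := by
    intro k
    induction k with
    | zero => simp
    | succ k ih =>
      intro x hx
      rw [pow_succ, mul_assoc, ih _ (mul_ne_zero hb hx), h x hx, pow_succ, mul_assoc]
  have hone : b ^ (Fintype.card K - 1) = 1 :=
    hf.eq_one_of_forall_mul_eq hq (pow_ne_zero _ hb) fun x hx => by
      rw [hpow _ x hx, FiniteField.pow_card_sub_one_eq_one _ t.ne_zero, one_mul]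
  obtain ⟨u, rfl⟩ := exists_unit_algebraMap_eq_of_pow_eq_one hone
  exact ⟨u, h⟩

/-- If `f` takes a nonzero value and every scaling of `f` is realized by a dilation by an element
of `K`, then dilations by `K` scale `f` through a power map of exponent coprime to `|K| - 1`. -/
theorem exists_isDHomogeneous_of_unit_scaling {K L : Type*} [Field K] [Field L] [Algebra K L]
    [Fintype K] {f : L → K} {x₀ : L} (hx₀ : x₀ ≠ 0) (hfx₀ : f x₀ ≠ 0)
    (h : ∀ t : Kˣ, ∃ u : Kˣ, ∀ x, x ≠ 0 → f (algebraMap K L u * x) = t * f x) :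
    ∃ d : ℕ, IsDHomogeneous (Fintype.card K) d f := by
  have hne : ∀ u : Kˣ, algebraMap K L u ≠ 0 := fun u => by simp
  choose g hg using h
  have hginj : Function.Injective g := fun s t hst =>
    Units.ext <| mul_right_cancel₀ hfx₀ <| by rw [← hg s x₀ hx₀, hst, hg t x₀ hx₀]
  choose σ hσ using Finite.surjective_of_injective hginj
  have hscale : ∀ (c : Kˣ) (x : L), x ≠ 0 → f (algebraMap K L c * x) = σ c * f x :=
    fun c x hx => by rw [← hg (σ c) x hx, hσ]
  have hinj : Function.Injective σ := fun c e hce => by rw [← hσ c, hce, hσ]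
  let τ : Kˣ →* Kˣ := MonoidHom.mk' σ fun c e => Units.ext <| mul_right_cancel₀ hfx₀ <| by
    rw [← hscale _ x₀ hx₀, Units.val_mul, map_mul, mul_assoc,
      hscale _ _ (mul_ne_zero (hne e) hx₀), hscale _ _ hx₀, Units.val_mul, mul_assoc]
  obtain ⟨d, hd, hpow⟩ := exists_coprime_pow_of_injective τ hinj
  rw [Nat.card_units, Nat.card_eq_fintype_card] at hd
  refine ⟨d, hd, fun c hc x hx => ?_⟩
  have hval : ((σ (Units.mk0 c hc) : Kˣ) : K) = c ^ d := by
    have := congrArg Units.val (hpow (Units.mk0 c hc))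
    simpa [τ] using this
  rw [← hval, ← hscale _ x hx, Units.val_mk0]

/-- For a surjective difference balanced function `f : L∖{0} → 𝔽_p`, the multiplier
property of the graph of `f` (every `(1,t)`, `t ∈ K∖{0}`, is a multiplier with
translate `(a,0)`) is equivalent to `f` being `d`-homogeneous. -/
theorem stmt_12 {K L : Type*} [Field K] [Field L] [Algebra K L] [Fintype K] [Fintype L]
    (p n : ℕ) (hp : p.Prime) (hodd : Odd p) (hn : 1 ≤ n)
    (hK : Fintype.card K = p) (hL : Fintype.card L = p ^ n)
    (f : L → K) (hsurj : ∀ b : K, ∃ x : L, x ≠ 0 ∧ f x = b)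
    (hf : IsDiffBalanced p n f) :
    (∀ t : K, t ≠ 0 → ∃ a : L, a ≠ 0 ∧
        {pr : L × K | ∃ x : L, x ≠ 0 ∧ pr = (x, t * f x)} =
          {pr : L × K | ∃ x : L, x ≠ 0 ∧ pr = (a * x, f x)}) ↔
      (∃ d : ℕ, IsDHomogeneous p d f) := by
  constructor
  · intro h
    obtain ⟨x₀, hx₀, hfx₀⟩ := hsurj 1
    rw [← hK]
    refine exists_isDHomogeneous_of_unit_scaling hx₀ (by simp [hfx₀]) fun t => ?_
    obtain ⟨a, ha, hset⟩ := h t t.ne_zero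
    exact hf.exists_unit_scaling hp.ne_zero t (inv_ne_zero ha)
      ((graph_eq_translate_iff f t ha).mp hset)
  · rintro ⟨d, hd, hhom⟩ t ht
    have hcop : (Nat.card Kˣ).Coprime d := by
      rw [Nat.card_units, Nat.card_eq_fintype_card, hK]
      exact hd.symm
    obtain ⟨c, hc⟩ := hcop.pow_left_bijective.surjective (Units.mk0 t ht)
    have hct : (c : K) ^ d = t := by simpa using congrArg Units.val hc
    have hne : algebraMap K L c ≠ 0 := by simp
    refine ⟨(algebraMap K L c)⁻¹, inv_ne_zero hne, ?_⟩
    rw [graph_eq_translate_iff f t (inv_ne_zero hne), inv_inv]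
    intro x hx
    rw [hhom c c.ne_zero x hx, hct]
end

section
/- (Gong–Song conjecture for q prime.) Let p be an odd prime and n ≥ 1. Let L be a finite field with |L| = p^n and K = 𝔽_p. Suppose f : L∖{0} → K is difference balanced and balanced (the latter normalization is no loss of generality, since every difference balanced function is an affine shift of a balanced one). Then f is d-homogeneous: there exists an integer d with gcd(d, p−1) = 1 such that f(a·x) = a^d f(x) for every a ∈ K∖{0} and every x ∈ L∖{0}. -/
open NumberField

theorem Ideal.map_eq_self_of_sub_mem {R : Type*} [CommRing R] (τ : R ≃+* R) (P : Ideal R)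
    (h : ∀ x, τ x - x ∈ P) : P.map τ = P := by
  apply le_antisymm
  · rw [Ideal.map_le_iff_le_comap]
    intro x hx
    simpa using P.add_mem (h x) hx
  · intro y hy
    have hx : τ.symm y ∈ P := by simpa using P.sub_mem hy (h (τ.symm y))
    simpa using Ideal.mem_map_of_mem τ hx

/-- If a ring automorphism acts trivially modulo every prime ideal containing `m`, it maps every
divisor of a power of `m` to an associate. -/
theorem associated_map_of_dvd_pow {R : Type*} [CommRing R] [IsDedekindDomain R] (τ : R ≃+* R)
    {m : R} (h : ∀ P : Ideal R, P.IsPrime → m ∈ P → ∀ x, τ x - x ∈ P) {x : R} {n : ℕ}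
    (hx : x ∣ m ^ n) : Associated (τ x) x := by
  suffices H : ∀ I : Ideal R, m ^ n ∈ I → I.map τ = I by
    rw [← Ideal.span_singleton_eq_span_singleton, ← H (Ideal.span {x})
      (Ideal.mem_span_singleton.mpr hx), Ideal.map_span, Set.image_singleton]
  intro I
  refine UniqueFactorizationMonoid.induction_on_prime I ?_ ?_ ?_
  · intro _
    exact Ideal.map_bot
  · intro J hJ _
    rw [Ideal.isUnit_iff.mp hJ, Ideal.map_top]
  · intro J P _ hP ih hm
    have hPm : m ^ n ∈ P := Ideal.mul_le_left (I := P) (J := J) hm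
    have hPp := Ideal.isPrime_of_prime hP
    rw [Ideal.map_mul, ih (Ideal.mul_le_right (I := P) (J := J) hm),
      Ideal.map_eq_self_of_sub_mem τ P (h P hPp (hPp.mem_of_pow_mem n hPm))]

theorem Ideal.IsPrime.sub_one_mem_of_pow_eq_one {R : Type*} [CommRing R] {p : ℕ} (hp : p.Prime)
    {P : Ideal R} (hP : P.IsPrime) (hpP : (p : R) ∈ P) {ζ : R} (hζ : ζ ^ p = 1) : ζ - 1 ∈ P := by
  obtain ⟨r, hr⟩ := exists_add_pow_prime_eq hp (ζ - 1) 1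
  apply hP.mem_of_pow_mem p
  have : (ζ - 1) ^ p = p * (-((ζ - 1) * r)) := by
    simp only [sub_add_cancel, hζ, one_pow, mul_one] at hr
    linear_combination -hr
  rw [this]
  exact P.mul_mem_right _ hpP

/-- For coprime `p` and `v`, the ring of integers of the `p * v`-th cyclotomic field contains
primitive roots of unity `ζ` and `ω` of orders `p` and `v`, and has automorphisms raising `ζ` to any
power prime to `p`, fixing `ω`, and acting trivially modulo `ζ - 1`. -/
theorem exists_cyclotomic_automorphisms (F : Type*) [Field F] [NumberField F] {p v : ℕ} [NeZero p]
    [NeZero v] [IsCyclotomicExtension {p * v} ℚ F] (hpv : p.Coprime v) :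
    ∃ ζ ω : 𝓞 F, IsPrimitiveRoot ζ p ∧ IsPrimitiveRoot ω v ∧
      ∀ b : ℕ, b.Coprime p → ∃ τ : 𝓞 F ≃+* 𝓞 F,
        τ ζ = ζ ^ b ∧ τ ω = ω ∧ ∀ x, ζ - 1 ∣ τ x - x := by
  have hpv0 : 0 < p * v := Nat.pos_of_ne_zero (NeZero.ne _)
  have hz := IsCyclotomicExtension.zeta_spec (p * v) ℚ F
  set ξ := hz.toInteger
  have hξ : IsPrimitiveRoot ξ (p * v) := hz.toInteger_isPrimitiveRoot
  have hζ : IsPrimitiveRoot (ξ ^ v) p := hξ.pow hpv0 (mul_comm p v)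
  have hω : IsPrimitiveRoot (ξ ^ p) v := hξ.pow hpv0 rfl
  refine ⟨ξ ^ v, ξ ^ p, hζ, hω, fun b hb => ?_⟩
  obtain ⟨c, hcp, hcv⟩ := Nat.chineseRemainder hpv b 1
  have hc : c.Coprime (p * v) := by
    apply Nat.Coprime.mul_right
    · rw [Nat.Coprime, hcp.gcd_eq]; exact hb
    · rw [Nat.Coprime, hcv.gcd_eq]; simp
  have hirr := Polynomial.cyclotomic.irreducible_rat hpv0
  let σ := IsCyclotomicExtension.fromZetaAut (hz.pow_of_coprime c hc) hirr
  have hσ : σ _ = _ := IsCyclotomicExtension.fromZetaAut_spec (hz.pow_of_coprime c hc) hirr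
  let τ := RingOfIntegers.mapRingEquiv σ.toRingEquiv
  have hτ : τ ξ = ξ ^ c := by
    apply RingOfIntegers.ext
    rw [RingOfIntegers.mapRingEquiv_apply]
    exact hσ.trans (map_pow (algebraMap (𝓞 F) F) ξ c).symm
  have hτω : τ (ξ ^ p) = ξ ^ p := by
    rw [map_pow, hτ, ← pow_mul, mul_comm c, pow_mul, pow_eq_pow_mod c hω.pow_eq_one, hcv,
      ← pow_eq_pow_mod 1 hω.pow_eq_one, pow_one]
  refine ⟨τ, ?_, hτω, ?_⟩
  · rw [map_pow, hτ, ← pow_mul, mul_comm c, pow_mul, pow_eq_pow_mod c hζ.pow_eq_one, hcp,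
      ← pow_eq_pow_mod b hζ.pow_eq_one]
  · have hξτ : ξ ^ v - 1 ∣ τ ξ - ξ := by
      obtain ⟨u, hu⟩ : ∃ u, τ ξ = ξ * (ξ ^ v) ^ u := by
        rcases Nat.eq_zero_or_pos c with rfl | hc0
        · refine ⟨p - 1, ?_⟩
          have hv : v = 1 := by simpa [Nat.ModEq] using (Nat.modEq_zero_iff_dvd.mp hcv.symm)
          have hp := Nat.pos_of_ne_zero (NeZero.ne p)
          rw [hτ, pow_zero, hv, pow_one, ← pow_succ', Nat.sub_add_cancel hp]
          simpa [hv] using hζ.pow_eq_one.symm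
        · obtain ⟨u, hu⟩ := (Nat.modEq_iff_dvd' hc0).mp hcv.symm
          exact ⟨u, by rw [hτ, ← pow_mul, ← hu, ← pow_succ', Nat.sub_add_cancel hc0]⟩
      have := (sub_one_dvd_pow_sub_one (ξ ^ v) u).mul_left ξ
      rwa [mul_sub, mul_one, ← hu] at this
    intro x
    have hx : x ∈ Algebra.adjoin ℤ {ξ} := by
      rw [IsCyclotomicExtension.Rat.adjoin_singleton_eq_top hz]
      trivial
    induction hx using Algebra.adjoin_induction with
    | mem x hx => rwa [Set.mem_singleton_iff.mp hx]
    | algebraMap r => simp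
    | add x y _ _ hx hy =>
      rw [map_add, add_sub_add_comm]
      exact dvd_add hx hy
    | mul x y _ _ hx hy =>
      have : τ (x * y) - x * y = τ x * (τ y - y) + (τ x - x) * y := by rw [map_mul]; ring
      rw [this]
      exact dvd_add (hy.mul_left _) (hx.mul_right _)

/-- The Fourier transform turns correlations into products. -/
theorem sum_correlation_mul_addChar {R S : Type*} [CommRing R] [Fintype R] [CommRing S]
    (ψ : AddChar R S) (u w : R → S) (j : R) :
    ∑ a, (∑ i, u (i + a) * w i) * ψ (a * j) =
      (∑ i, u i * ψ (i * j)) * ∑ i, w i * ψ (i * -j) := by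
  rw [Finset.mul_sum]
  simp_rw [Finset.sum_mul]
  rw [Finset.sum_comm]
  refine Finset.sum_congr rfl fun i _ => ?_
  rw [← Equiv.sum_comp (Equiv.addLeft i) fun k => u k * ψ (k * j) * (w i * ψ (i * -j))]
  refine Finset.sum_congr rfl fun a _ => ?_
  have h : ψ (a * j) = ψ ((i + a) * j) * ψ (i * -j) := by
    rw [← AddChar.map_add_eq_mul]
    ring_nf
  rw [h, Equiv.coe_addLeft]
  ring

/-- Fourier inversion on a finite commutative ring. -/
theorem sum_fourier_mul_addChar_neg {R S : Type*} [CommRing R] [Fintype R] [CommRing S] [IsDomain S]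
    {ψ : AddChar R S} (hψ : ψ.IsPrimitive) (E : R → S) (a : R) :
    ∑ j, (∑ c, E c * ψ (c * j)) * ψ (-(a * j)) = Fintype.card R * E a := by
  classical
  simp_rw [Finset.sum_mul]
  rw [Finset.sum_comm]
  have h : ∀ c, ∑ j, E c * ψ (c * j) * ψ (-(a * j)) =
      if c = a then Fintype.card R * E a else 0 := by
    intro c
    have : ∀ j, E c * ψ (c * j) * ψ (-(a * j)) = E c * ψ (j * (c - a)) := by
      intro j
      rw [mul_assoc, ← AddChar.map_add_eq_mul]
      ring_nf
    simp_rw [this, ← Finset.mul_sum, AddChar.sum_mulShift _ hψ, sub_eq_zero]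
    split_ifs with hca
    · rw [hca, mul_comm]
    · simp
  simp_rw [h]
  simp

/-- A sum of complex numbers of norm one that, after adding one, has the largest possible
norm, has all its terms equal to one. -/
theorem eq_one_of_norm_one_add_sum {ι : Type*} [Fintype ι] {z : ι → ℂ} (hz : ∀ i, ‖z i‖ = 1)
    (h : ‖1 + ∑ i, z i‖ = 1 + Fintype.card ι) (i : ι) : z i = 1 := by
  classical
  have hsum : 1 + ∑ k, z k = (1 + z i) + ∑ k ∈ Finset.univ.erase i, z k := by
    rw [add_assoc, Finset.add_sum_erase _ _ (Finset.mem_univ i)]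
  have hrest : ‖∑ k ∈ Finset.univ.erase i, z k‖ ≤ Fintype.card ι - 1 := by
    refine (norm_sum_le _ _).trans ?_
    have hcard := Finset.card_erase_add_one (Finset.mem_univ i)
    rw [Finset.card_univ] at hcard
    simp only [hz, Finset.sum_const, nsmul_eq_mul, mul_one, ← hcard]
    push_cast
    linarith
  have htwo : ‖(1 : ℂ) + z i‖ = ‖(1 : ℂ)‖ + ‖z i‖ := by
    apply le_antisymm (norm_add_le _ _)
    have := norm_add_le (1 + z i) (∑ k ∈ Finset.univ.erase i, z k)
    rw [← hsum, h] at this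
    rw [norm_one, hz]
    linarith
  have := (sameRay_iff_norm_add.mpr htwo).norm_smul_eq
  simpa [hz, eq_comm] using this

/-- Cross-correlations of difference balanced sequences are congruent to `-1` modulo `v + 1`. -/
theorem natCast_dvd_crossCorrelation_add_one {S : Type*} [CommRing S] [IsDedekindDomain S]
    {A B : Type*} [CommRing A] [Fintype A] [CommRing B] {φ : AddChar B S}
    {ψ : AddChar A S} (hψ : ψ.IsPrimitive) {h : A → B} {b : B} {q : ℕ}
    (hq : Fintype.card A + 1 = q) (τ : S ≃+* S) (hτφ : ∀ x, τ (φ x) = φ (b * x))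
    (hτψ : ∀ x, τ (ψ x) = ψ x) (hτ : ∀ x : S, x ∣ q → Associated (τ x) x)
    (hdb : ∀ a, a ≠ 0 → ∑ i, φ (h (i + a) - h i) = -1)
    (hbal : ∑ i, φ (b * h i) = -1) (hbal' : ∑ i, φ (-h i) = -1) (a : A) :
    (q : S) ∣ ∑ i, φ (b * h (i + a) - h i) + 1 := by
  classical
  have hqS : (q : S) = Fintype.card A + 1 := by rw [← hq]; push_cast; rfl
  have hsub : ∀ x y, φ (x - y) = φ x * φ (-y) := fun x y => by
    rw [sub_eq_add_neg, AddChar.map_add_eq_mul]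
  have hauto : ∀ j, j ≠ 0 →
      (∑ i, φ (h i) * ψ (i * j)) * ∑ i, φ (-h i) * ψ (i * -j) = q := by
    intro j hj
    rw [← sum_correlation_mul_addChar ψ (fun i => φ (h i)) (fun i => φ (-h i)) j]
    simp_rw [← hsub]
    have hE : ∀ c, (∑ i, φ (h (i + c) - h i)) * ψ (c * j) =
        (if c = 0 then (q : S) else 0) - ψ (c * j) := by
      intro c
      split_ifs with hc
      · simp [hc, hqS]
      · rw [hdb c hc]; ring
    simp_rw [hE]
    rw [Finset.sum_sub_distrib, AddChar.sum_mulShift _ hψ]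
    simp [hj]
  have hcross : ∀ j, j ≠ 0 →
      (q : S) ∣ ∑ c, (∑ i, φ (b * h (i + c) - h i)) * ψ (c * j) := by
    intro j hj
    simp_rw [hsub]
    rw [sum_correlation_mul_addChar ψ (fun i => φ (b * h i)) (fun i => φ (-h i)) j]
    have himg : τ (∑ i, φ (h i) * ψ (i * j)) = ∑ i, φ (b * h i) * ψ (i * j) := by
      simp_rw [map_sum, map_mul, hτφ, hτψ]
    rw [← himg]
    conv_lhs => rw [← hauto j hj]
    exact mul_dvd_mul_right (hτ _ (Dvd.intro _ (hauto j hj))).symm.dvd _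
  have hzero : ∑ c, (∑ i, φ (b * h (i + c) - h i)) * ψ (c * 0) = 1 := by
    simp_rw [hsub]
    rw [sum_correlation_mul_addChar ψ (fun i => φ (b * h i)) (fun i => φ (-h i)) 0]
    simp [hbal, hbal']
  set E : A → S := fun c => ∑ i, φ (b * h (i + c) - h i)
  have hinv := sum_fourier_mul_addChar_neg hψ E a
  rw [← Finset.add_sum_erase _ _ (Finset.mem_univ 0), hzero] at hinv
  have hrest : (q : S) ∣ ∑ j ∈ Finset.univ.erase 0, (∑ c, E c * ψ (c * j)) * ψ (-(a * j)) :=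
    Finset.dvd_sum fun j hj => (hcross j (Finset.ne_of_mem_erase hj)).mul_right _
  have hgoal : E a + 1 = q * E a -
      ∑ j ∈ Finset.univ.erase 0, (∑ c, E c * ψ (c * j)) * ψ (-(a * j)) := by
    rw [hqS]
    simp only [mul_zero, neg_zero, AddChar.map_zero_eq_one, mul_one] at hinv
    linear_combination hinv
  rw [hgoal]
  exact dvd_sub (dvd_mul_right _ _) hrest

theorem AddChar.sum_comp_eq_neg_one_of_balanced {ι B S : Type*} [Fintype ι] [AddCommGroup B]
    [Fintype B] [CommRing S] [IsDomain S] {χ : AddChar B S} (hχ : χ ≠ 1) {g : ι → B} {m : ℕ}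
    (hzero : Nat.card {i // g i = 0} + 1 = m) (hne : ∀ b ≠ 0, Nat.card {i // g i = b} = m) :
    ∑ i, χ (g i) = -1 := by
  classical
  have hfiber : ∀ b, (∑ i with g i = b, χ (g i)) = m * χ b - if b = 0 then 1 else 0 := by
    intro b
    have hconst : (∑ i with g i = b, χ (g i)) = Nat.card {i // g i = b} * χ b := by
      rw [Finset.sum_congr rfl fun i hi => by rw [(Finset.mem_filter.mp hi).2], Finset.sum_const,
        nsmul_eq_mul, Nat.card_eq_fintype_card, Fintype.card_subtype]
    rw [hconst]
    split_ifs with hb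
    · rw [hb, ← hzero]
      push_cast
      rw [AddChar.map_zero_eq_one]
      ring
    · rw [hne b hb, sub_zero]
  rw [← Finset.sum_fiberwise Finset.univ g]
  simp_rw [hfiber]
  rw [Finset.sum_sub_distrib, ← Finset.mul_sum, AddChar.sum_eq_zero_of_ne_one hχ]
  simp

/-- A sequence of period `p ^ n - 1` over the field with `p` elements all of whose nontrivial
character sums and autocorrelations are `-1` is, up to scaling by `b ≠ 0`, a shift of itself. -/
theorem exists_shift_of_autocorrelation (F : Type*) [Field F] [NumberField F] {p n v : ℕ}
    (hp : p.Prime) [NeZero v] [IsCyclotomicExtension {p * v} ℚ F] (hn : n ≠ 0)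
    (hv : v + 1 = p ^ n) {K : Type*} [Field K] (e : K ≃+* ZMod p) {h : ZMod v → K}
    (hdb : ∀ χ : AddChar K (𝓞 F), χ ≠ 1 → ∀ a ≠ 0, ∑ i, χ (h (i + a) - h i) = -1)
    (hbal : ∀ χ : AddChar K (𝓞 F), χ ≠ 1 → ∑ i, χ (h i) = -1) {b : K} (hb : b ≠ 0) :
    ∃ a, ∀ i, b * h (i + a) = h i := by
  have : Fact p.Prime := ⟨hp⟩
  have : NeZero p := ⟨hp.ne_zero⟩
  have hpv : p.Coprime v := by
    rw [hp.coprime_iff_not_dvd]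
    intro hdvd
    have h1 : p ∣ v + 1 := hv ▸ dvd_pow_self p hn
    exact hp.one_lt.ne' (Nat.dvd_one.mp ((Nat.dvd_add_right hdvd).mp h1))
  obtain ⟨ζ, ω, hζ, hω, haut⟩ := exists_cyclotomic_automorphisms F hpv
  let φ : AddChar K (𝓞 F) :=
    (AddChar.zmodChar p hζ.pow_eq_one).compAddMonoidHom e.toAddEquiv.toAddMonoidHom
  have hφ : ∀ x, φ x = ζ ^ (e x).val := fun x => rfl
  have hφ_eq_one : ∀ x, φ x = 1 → x = 0 := by
    intro x hx
    rw [hφ, hζ.pow_eq_one_iff_dvd] at hx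
    have := Nat.eq_zero_of_dvd_of_lt hx (ZMod.val_lt _)
    simpa using this
  have hbal_scaled : ∀ c : K, c ≠ 0 → ∑ i, φ (c * h i) = -1 := by
    intro c hc
    refine hbal (φ.mulShift c) fun hone => hc ?_
    apply hφ_eq_one
    simpa using DFunLike.congr_fun hone 1
  have hφ_ne_one : φ ≠ 1 := fun hone =>
    one_ne_zero (hφ_eq_one 1 (DFunLike.congr_fun hone 1))
  obtain ⟨τ, hτζ, hτω, hτ⟩ := haut (e b).val <| by
    rw [Nat.coprime_comm, hp.coprime_iff_not_dvd]
    intro hdvd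
    have := Nat.eq_zero_of_dvd_of_lt hdvd (ZMod.val_lt _)
    simp [hb] at this
  have hdvd := natCast_dvd_crossCorrelation_add_one (S := 𝓞 F) (φ := φ) (b := b) (h := h)
    (AddChar.zmodChar_primitive_of_primitive_root v hω) (q := p ^ n) (by rw [ZMod.card, hv]) τ
    (fun x => by
      rw [hφ, hφ, map_pow, hτζ, ← pow_mul, map_mul, ZMod.val_mul,
        ← pow_eq_pow_mod _ hζ.pow_eq_one])
    (fun x => by rw [AddChar.zmodChar_apply, map_pow, hτω])
    (fun x hx => by
      rw [Nat.cast_pow] at hx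
      exact associated_map_of_dvd_pow τ (fun P hP hpP y => Ideal.mem_of_dvd P (hτ y)
        (hP.sub_one_mem_of_pow_eq_one hp hpP hζ.pow_eq_one)) hx)
    (hdb φ hφ_ne_one) (hbal_scaled b hb)
    (by simpa using hbal_scaled (-1) (by simp))
  choose w hw using hdvd
  have hq0 : ((p ^ n : ℕ) : 𝓞 F) ≠ 0 := by
    exact_mod_cast (pow_pos hp.pos n).ne'
  have hsum : ∑ a, (∑ i, φ (b * h (i + a) - h i) + 1) = ((p ^ n : ℕ) : 𝓞 F) := by
    have := sum_correlation_mul_addChar (1 : AddChar (ZMod v) (𝓞 F)) (fun i => φ (b * h i))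
      (fun i => φ (-h i)) 0
    simp only [← AddChar.map_add_eq_mul, ← sub_eq_add_neg, AddChar.one_apply, mul_one,
      hbal_scaled b hb] at this
    have hneg : ∑ i, φ (-h i) = -1 := by simpa using hbal_scaled (-1) (by simp)
    rw [Finset.sum_add_distrib, this, hneg, ← hv]
    simp [add_comm]
  obtain ⟨a, -, ha⟩ := Finset.exists_ne_zero_of_sum_ne_zero (hsum ▸ hq0)
  refine ⟨a, fun i => ?_⟩
  have hwa : w a ≠ 0 := fun h0 => ha (by rw [hw, h0, mul_zero])
  have hunit : ∀ (ρ : F →+* ℂ) (x : K), ‖ρ (φ x)‖ = 1 := by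
    intro ρ x
    refine Complex.norm_eq_one_of_pow_eq_one (n := p) ?_ hp.ne_zero
    rw [← map_pow, ← map_pow, hφ, ← pow_mul, mul_comm, pow_mul, hζ.pow_eq_one]
    simp
  have hρ : ∀ ρ : F →+* ℂ,
      (p ^ n : ℝ) * ‖ρ (w a)‖ = ‖1 + ∑ k, ρ (φ (b * h (k + a) - h k))‖ := by
    intro ρ
    have := congrArg (fun y : 𝓞 F => ‖ρ y‖) (hw a)
    simp only [map_add, map_mul, map_sum, map_one, norm_mul, map_natCast] at this
    rw [add_comm, this]
    simp
  have hcard : (p ^ n : ℝ) = 1 + v := by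
    have := congrArg (Nat.cast (R := ℝ)) hv
    push_cast at this
    linarith
  have hqpos : (0 : ℝ) < p ^ n := by rw [hcard]; positivity
  have hle : ∀ ρ : F →+* ℂ, ‖ρ (w a)‖ ≤ 1 := by
    intro ρ
    refine le_of_mul_le_mul_left ?_ hqpos
    rw [hρ, mul_one, hcard]
    refine (norm_add_le _ _).trans ?_
    rw [norm_one]
    gcongr
    refine (norm_sum_le _ _).trans ?_
    simp [hunit]
  obtain ⟨m, hm, hwm⟩ := NumberField.Embeddings.pow_eq_one_of_norm_le_one F ℂ
    (x := (w a : F)) (by simpa using hwa) (w a).isIntegral_coe hle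
  obtain ⟨ρ⟩ : Nonempty (F →+* ℂ) := inferInstance
  have hone : ‖ρ (w a)‖ = 1 :=
    Complex.norm_eq_one_of_pow_eq_one (by rw [← map_pow, hwm, map_one]) hm.ne'
  have hext := eq_one_of_norm_one_add_sum (fun k => hunit ρ (b * h (k + a) - h k))
    (by rw [← hρ, hone, mul_one, hcard, ZMod.card]) i
  rw [← sub_eq_zero]
  apply hφ_eq_one
  apply RingOfIntegers.ext
  apply ρ.injective
  simpa using hext

theorem Subgroup.eq_of_natCard_eq {G : Type*} [CommGroup G] [IsCyclic G] [Finite G]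
    {H₁ H₂ : Subgroup G} (h : Nat.card H₁ = Nat.card H₂) : H₁ = H₂ := by
  have key : ∀ H : Subgroup G, H = (powMonoidHom (Nat.card H) : G →* G).ker := by
    intro H
    apply Subgroup.eq_of_le_of_card_ge
    · intro x hx
      rw [MonoidHom.mem_ker, powMonoidHom_apply]
      exact congrArg Subtype.val (pow_card_eq_one' (x := (⟨x, hx⟩ : H)))
    · rw [IsCyclic.card_powMonoidHom_ker, Nat.gcd_eq_right H.card_subgroup_dvd_card]
  rw [key H₁, key H₂, h]

/-- Every automorphism of a finite cyclic group is a power map with exponent prime to its order. -/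
theorem MulEquiv.exists_coprime_pow_eq {G : Type*} [CommGroup G] [IsCyclic G] [Finite G]
    (r : G ≃* G) : ∃ d : ℕ, d.Coprime (Nat.card G) ∧ ∀ g, r g = g ^ d := by
  obtain ⟨γ, hγ⟩ := IsCyclic.exists_generator (α := G)
  obtain ⟨d, hd⟩ := mem_powers_iff_mem_zpowers.mpr (hγ (r γ))
  have hd : γ ^ d = r γ := hd
  refine ⟨d, ?_, fun g => ?_⟩
  · have hord : orderOf (γ ^ d) = orderOf γ := by rw [hd, MulEquiv.orderOf_eq]
    rw [← orderOf_eq_card_of_forall_mem_zpowers hγ, Nat.coprime_comm]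
    rw [orderOf_pow] at hord
    exact (Nat.div_eq_self.mp hord).resolve_left (orderOf_pos γ).ne'
  · obtain ⟨k, rfl⟩ := Subgroup.mem_zpowers_iff.mp (hγ g)
    rw [map_zpow, ← hd, ← zpow_natCast, ← zpow_natCast, ← zpow_mul, ← zpow_mul, mul_comm]

/-- A function on `Lˣ` for which scaling by every element of `Kˣ` is realized by a unique dilation
is homogeneous. -/
theorem exists_coprime_homogeneous {K L : Type*} [Field K] [Field L] [Algebra K L] [Finite K]
    [Finite L] {f : L → K} (hscale : ∀ b : Kˣ, ∃ g : Lˣ, ∀ x : Lˣ, b * f (g * x) = f x)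
    (huniq : ∀ g : Lˣ, (∀ x : Lˣ, f (g * x) = f x) → g = 1) (hne : ∃ x : Lˣ, f x ≠ 0) :
    ∃ d : ℕ, d.Coprime (Nat.card Kˣ) ∧
      ∀ (c : Kˣ) (x : Lˣ), f (algebraMap K L c * x) = c ^ d * f x := by
  choose s hs using hscale
  have hs_eq : ∀ (b : Kˣ) (g : Lˣ), (∀ x : Lˣ, b * f (g * x) = f x) → s b = g := by
    intro b g hg
    refine mul_inv_eq_one.mp (huniq _ fun x => ?_)
    have h₁ := hs b (g⁻¹ * x)
    have h₂ := hg (g⁻¹ * x)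
    rw [← h₂] at h₁
    simpa [mul_assoc] using mul_left_cancel₀ b.ne_zero h₁
  let S : Kˣ →* Lˣ := MonoidHom.mk' s fun b c => hs_eq _ _ fun x => by
    have h₁ := hs b (s c * x)
    have h₂ := hs c x
    push_cast at h₁ h₂ ⊢
    rw [← h₂, ← h₁]
    ring_nf
  have hS : Function.Injective S := by
    intro b c hbc
    obtain ⟨x, hx⟩ := hne
    have hbc : s b = s c := hbc
    have hb := hs b x
    rw [← hs c x, hbc] at hb
    refine Units.ext (mul_right_cancel₀ (fun h0 => hx ?_) hb)
    rw [← hs c x, h0, mul_zero]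
  have hU : Function.Injective (Units.map (algebraMap K L : K →* L)) :=
    Units.map_injective (algebraMap K L).injective
  have hrange : (Units.map (algebraMap K L : K →* L)).range = S.range := by
    apply Subgroup.eq_of_natCard_eq
    rw [← Nat.card_congr (MonoidHom.ofInjective hS).toEquiv,
      ← Nat.card_congr (MonoidHom.ofInjective hU).toEquiv]
  let r : Kˣ ≃* Kˣ := ((MonoidHom.ofInjective hU).trans
    (MulEquiv.subgroupCongr hrange)).trans (MonoidHom.ofInjective hS).symm
  have hr : ∀ c, s (r c) = Units.map (algebraMap K L : K →* L) c := fun c =>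
    MonoidHom.apply_ofInjective_symm hS _
  obtain ⟨d, hd, hrd⟩ := (r.trans (MulEquiv.inv Kˣ)).exists_coprime_pow_eq
  refine ⟨d, hd, fun c x => ?_⟩
  have h₁ := hs (r c) x
  have h₂ : (r c)⁻¹ = c ^ d := hrd c
  rw [hr] at h₁
  rw [← Units.val_pow_eq_pow_val, ← h₂, ← h₁, Units.inv_mul_cancel_left]
  rfl

/-- The character sums of a balanced function. -/
theorem IsBalanced.sum_units_addChar {K L S : Type*} [Field K] [Field L] [Fintype K] [Fintype L]
    [CommRing S] [IsDomain S] {q n : ℕ} (hq : 0 < q) {g : L → K} (hg : IsBalanced q n g)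
    {χ : AddChar K S} (hχ : χ ≠ 1) {ι : Type*} [Fintype ι] (ε : ι ≃ Lˣ) :
    ∑ i, χ (g (ε i)) = -1 := by
  have hcard : ∀ b, Nat.card {i // g (ε i) = b} = Nat.card {x : L | x ≠ 0 ∧ g x = b} := by
    intro b
    refine Nat.card_congr ?_
    refine (ε.subtypeEquiv (q := fun x : Lˣ => g x = b) fun _ => Iff.rfl).trans ?_
    refine (unitsEquivNeZero.subtypeEquiv (q := fun x : {x : L // x ≠ 0} => g x = b)
      fun _ => Iff.rfl).trans ?_
    exact Equiv.subtypeSubtypeEquivSubtypeInter (fun x : L => x ≠ 0) fun x => g x = b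
  apply AddChar.sum_comp_eq_neg_one_of_balanced hχ (m := q ^ (n - 1))
  · rw [hcard, hg.1]
    exact Nat.sub_add_cancel (Nat.pow_pos hq)
  · intro b hb
    rw [hcard, hg.2 b hb]

/-- Gong–Song conjecture for `q = p` prime: every balanced difference balanced
function `f : L∖{0} → 𝔽_p` is `d`-homogeneous. -/
theorem stmt_13 {K L : Type*} [Field K] [Field L] [Algebra K L] [Fintype K] [Fintype L]
    (p n : ℕ) (hp : p.Prime) (hodd : Odd p) (hn : 1 ≤ n)
    (hK : Fintype.card K = p) (hL : Fintype.card L = p ^ n)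
    (f : L → K) (hdb : IsDiffBalanced p n f) (hbal : IsBalanced p n f) :
    ∃ d : ℕ, IsDHomogeneous p d f := by
  have hattained : ∀ g : L → K, IsBalanced p n g → ∃ x : Lˣ, g x = 1 := by
    intro g hg
    have hpos : 0 < Nat.card {x : L | x ≠ 0 ∧ g x = 1} := by
      rw [hg.2 1 one_ne_zero]
      exact Nat.pow_pos hp.pos
    obtain ⟨⟨x, hx0, hx⟩⟩ := (Nat.card_pos_iff.mp hpos).1
    exact ⟨Units.mk0 x hx0, hx⟩
  have hcardL : Nat.card Lˣ + 1 = p ^ n := by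
    rw [Nat.card_units, Nat.card_eq_fintype_card, hL]
    exact Nat.sub_add_cancel (Nat.pow_pos hp.pos)
  have : NeZero (Nat.card Lˣ) := ⟨Nat.card_pos.ne'⟩
  have : NeZero p := ⟨hp.ne_zero⟩
  let ε := zmodCyclicMulEquiv (G := Lˣ) inferInstance
  let F := CyclotomicField (p * Nat.card Lˣ) ℚ
  have hcyc : IsCyclotomicExtension {p * Nat.card Lˣ} ℚ F :=
    CyclotomicField.isCyclotomicExtension _ _
  have hF : NumberField F := IsCyclotomicExtension.numberField {p * Nat.card Lˣ} ℚ F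
  let ε' : ZMod (Nat.card Lˣ) ≃ Lˣ := Multiplicative.ofAdd.trans ε.toEquiv
  have hε_add : ∀ i a, ε' (i + a) = ε' a * ε' i := by
    intro i a
    rw [mul_comm]
    exact map_mul ε (Multiplicative.ofAdd i) (Multiplicative.ofAdd a)
  have hshift := fun b : K => exists_shift_of_autocorrelation F hp (by lia) hcardL
    (ZMod.ringEquivOfPrime K hp hK).symm (h := fun i => f (ε' i)) (b := b)
    (fun χ hχ a ha => by
      have hne : ε' a ≠ 1 := fun h1 => ha (ε'.injective (h1.trans (map_one ε).symm))
      have := (hdb (ε' a) (ε' a).ne_zero (by simpa using hne)).sum_units_addChar hp.pos hχ ε'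
      simpa [hε_add] using this)
    (fun χ hχ => hbal.sum_units_addChar hp.pos hχ ε')
  obtain ⟨d, hd, hhom⟩ := exists_coprime_homogeneous (f := f)
    (fun b => by
      obtain ⟨a, ha⟩ := hshift b b.ne_zero
      refine ⟨ε' a, fun x => ?_⟩
      have := ha (ε'.symm x)
      simpa [hε_add] using this)
    (fun g hg => by
      by_contra hg1
      obtain ⟨x, hx⟩ := hattained _ (hdb g g.ne_zero (by simpa using hg1))
      simp [hg] at hx)
    (by
      obtain ⟨x, hx⟩ := hattained f hbal
      exact ⟨x, by simp [hx]⟩)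
  rw [Nat.card_units, Nat.card_eq_fintype_card, hK] at hd
  exact ⟨d, hd, fun c hc x hx => hhom (Units.mk0 c hc) (Units.mk0 x hx)⟩
end
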